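/- arXiv:2604.18577 — 12 statements merged into one kernel-verified Lean document; each statement's English description precedes it below -/
import Mathlib

section
/- (Lifting theorem for tuples.) Let G be an abelian group, let 𝒜 = (A₁,…,A_q) be a q-tuple of nonempty subsets of G, and fix r ∈ ℕ. Assume that for each i the set A_i is an asymptotic (r,ℓ_i)-approximate group. Then 𝒜 is a chromatic asymptotic (r, ∏_{i=1}^q ℓ_i)-approximate group. -/
open Pointwise BigOperators

/-- The `h`-fold iterated sumset `hA = A + ⋯ + A` (`h` times), with `0A = {0}`. -/
def hfold {G : Type*} [AddCommMonoid G] : ℕ → Set G → Set G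
  | 0, _ => {0}
  | n + 1, A => A + hfold n A

/-- The chromatic sumset `h·𝒜 = h₁A₁ + ⋯ + h_qA_q`. -/
def chromSum {G : Type*} [AddCommMonoid G] {q : ℕ} (h : Fin q → ℕ) (A : Fin q → Set G) :
    Set G :=
  ∑ i, hfold (h i) (A i)

/-- `𝒜` is a chromatic asymptotic `(r,ℓ)`-approximate group: there is a threshold vector
`h₀` such that for all `h ⪰ h₀` there is `X_h ⊆ G` with `|X_h| ≤ ℓ` and
`(rh)·𝒜 ⊆ X_h + h·𝒜`. -/
def IsCAAG {G : Type*} [AddCommGroup G] {q : ℕ} (A : Fin q → Set G) (r ℓ : ℕ) : Prop :=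
  ∃ h₀ : Fin q → ℕ, ∀ h : Fin q → ℕ, (∀ i, h₀ i ≤ h i) →
    ∃ X : Finset G, X.card ≤ ℓ ∧
      chromSum (fun i => r * h i) A ⊆ ↑X + chromSum h A

/-- `A` is an asymptotic `(r,ℓ)`-approximate group: there is `h₀` such that for all
`h ≥ h₀` there is `X_h ⊆ G` with `|X_h| ≤ ℓ` and `r(hA) ⊆ X_h + hA`. -/
def IsAAG {G : Type*} [AddCommGroup G] (A : Set G) (r ℓ : ℕ) : Prop :=
  ∃ h₀ : ℕ, ∀ h : ℕ, h₀ ≤ h →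
    ∃ X : Finset G, X.card ≤ ℓ ∧ hfold r (hfold h A) ⊆ ↑X + hfold h A

theorem hfold_add' {G : Type*} [AddCommMonoid G] (m n : ℕ) (A : Set G) :
    hfold (m + n) A = hfold m A + hfold n A := by
  induction m with
  | zero =>
    have : hfold 0 A = (0 : Set G) := rfl
    rw [this, zero_add, zero_add]
  | succ m ih =>
    have e : m + 1 + n = (m + n) + 1 := by omega
    rw [e]
    change A + hfold (m + n) A = A + hfold m A + hfold n A
    rw [ih, add_assoc]

theorem hfold_mul' {G : Type*} [AddCommMonoid G] (r h : ℕ) (A : Set G) :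
    hfold (r * h) A = hfold r (hfold h A) := by
  induction r with
  | zero => rw [Nat.zero_mul]; rfl
  | succ r ih =>
    rw [Nat.succ_mul, add_comm (r * h) h, hfold_add', ih]
    rfl

theorem finset_cover_aux {G ι : Type*} [AddCommGroup G] (s : Finset ι) (B C : ι → Set G)
    (X : ι → Finset G) (ℓ : ι → ℕ) (hX : ∀ i, (X i).card ≤ ℓ i)
    (hB : ∀ i, B i ⊆ ↑(X i) + C i) :
    ∃ Y : Finset G, Y.card ≤ ∏ i ∈ s, ℓ i ∧ ∑ i ∈ s, B i ⊆ ↑Y + ∑ i ∈ s, C i := by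
  classical
  induction s using Finset.induction_on with
  | empty => exact ⟨{0}, by simp, by simp⟩
  | insert a s ha ih =>
    obtain ⟨Y, hY, hs⟩ := ih
    refine ⟨X a + Y, ?_, ?_⟩
    · rw [Finset.prod_insert ha]
      exact Finset.card_add_le.trans (Nat.mul_le_mul (hX a) hY)
    · rw [Finset.sum_insert ha, Finset.sum_insert ha, Finset.coe_add, add_add_add_comm]
      exact Set.add_subset_add (hB a) hs

/-- Lifting theorem for tuples: if each color class `Aᵢ` is an asymptotic
`(r,ℓᵢ)`-approximate group, then `𝒜` is a chromatic asymptotic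
`(r, ∏ᵢ ℓᵢ)`-approximate group. -/
theorem stmt3 {G : Type*} [AddCommGroup G] {q : ℕ} (A : Fin q → Set G)
    (hA : ∀ i, (A i).Nonempty) (r : ℕ) (hr : 0 < r) (ℓ : Fin q → ℕ)
    (hcolor : ∀ i, IsAAG (A i) r (ℓ i)) :
    IsCAAG A r (∏ i, ℓ i) := by
  choose h₀ H using hcolor
  refine ⟨h₀, fun h hh => ?_⟩
  choose X hX hB using fun i => H i (h i) (hh i)
  refine finset_cover_aux Finset.univ (fun i => hfold (r * h i) (A i))
    (fun i => hfold (h i) (A i)) X ℓ hX (fun i => ?_)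
  rw [hfold_mul']
  exact hB i
end

section
/- (Lattice-covering lemma for simplices.) Let d, R, t ∈ ℕ and put M := ⌊dR/t⌋. Then the set of lattice points Δ_d(R) ∩ ℤ^d can be covered by at most C(M+d, d) translates, by elements of ℤ^d, of Δ_d(t)° ∩ ℤ^d; that is, there exist vectors v₁,…,v_N ∈ ℤ^d with N ≤ C(M+d, d) such that every x ∈ Δ_d(R) ∩ ℤ^d lies in v_j + (Δ_d(t)° ∩ ℤ^d) for some j. -/
open BigOperators

/-- Lattice-covering lemma for simplices: the lattice points of `Δ_d(R)` can be covered by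
at most `C(⌊dR/t⌋ + d, d)` integer translates of the lattice points of `Δ_d(t)°`. -/
theorem stmt4 (d R t : ℕ) (hd : 0 < d) (hR : 0 < R) (ht : 0 < t) :
    ∃ (N : ℕ) (v : Fin N → (Fin d → ℤ)),
      N ≤ (d * R / t + d).choose d ∧
      ∀ x : Fin d → ℤ, (∀ i, 0 ≤ x i) → (∑ i, x i) ≤ (R : ℤ) →
        ∃ j : Fin N, (∀ i, 0 ≤ x i - v j i) ∧ (∑ i, (x i - v j i)) < (t : ℤ) := by
  obtain ⟨M, hM⟩ : ∃ M, M = d * R / t := ⟨_, rfl⟩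
  rw [← hM]
  obtain ⟨e⟩ : Nonempty (Sym (Fin (d + 1)) M ≃ Fin (Fintype.card (Sym (Fin (d + 1)) M))) :=
    ⟨Fintype.equivFin _⟩
  refine ⟨Fintype.card (Sym (Fin (d + 1)) M),
    fun j i => (((t * Multiset.count i.succ (e.symm j : Multiset (Fin (d + 1))) + (d - 1)) / d : ℕ) : ℤ),
    ?_, ?_⟩
  · rw [Sym.card_sym_eq_choose, Fintype.card_fin]
    have h : d + 1 + M - 1 = M + d := by omega
    rw [h, ← Nat.choose_symm_add]
  · intro x hx hs
    lift x to Fin d → ℕ using hx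
    have hs' : ∑ i, x i ≤ R := by
      simp only at hs
      exact_mod_cast hs
    let a : Fin d → ℕ := fun i => d * x i / t
    have hta : ∀ i, t * a i ≤ d * x i := fun i => Nat.mul_div_le _ _
    have hta' : ∀ i, d * x i < t * a i + t := fun i => by
      have := Nat.lt_mul_div_succ (d * x i) ht
      simpa [a, mul_add] using this
    have ha : ∑ i, a i ≤ M := by
      rw [hM, Nat.le_div_iff_mul_le ht, mul_comm, Finset.mul_sum]
      calc ∑ i, t * a i ≤ ∑ i, d * x i := Finset.sum_le_sum fun i _ => hta i
        _ = d * ∑ i, x i := by rw [Finset.mul_sum]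
        _ ≤ d * R := Nat.mul_le_mul_left _ hs'
    let f : Fin (d + 1) →₀ ℕ :=
      Finsupp.equivFunOnFinite.symm (Fin.cons (M - ∑ i, a i) a : Fin (d + 1) → ℕ)
    have hf : Multiset.card (Finsupp.toMultiset f) = M := by
      rw [Finsupp.card_toMultiset, Finsupp.sum_fintype _ _ (fun _ => rfl), Fin.sum_univ_succ]
      simp [f]
      omega
    have key : ∀ i, (((t * a i + (d - 1)) / d : ℕ) : ℤ) ≤ x i ∧
        (d : ℤ) * ((x i : ℤ) - ((t * a i + (d - 1)) / d : ℕ)) < t := by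
      intro i
      have h1 := hta i
      have h2 := hta' i
      have h3 := Nat.mul_div_le (t * a i + (d - 1)) d
      have h4 := Nat.lt_mul_div_succ (t * a i + (d - 1)) hd
      generalize (t * a i + (d - 1)) / d = w at *
      constructor
      · have : d * w < d * (x i + 1) := by rw [mul_add]; omega
        have := Nat.lt_of_mul_lt_mul_left this
        omega
      · rw [mul_add] at h4
        have h5 : d * x i < d * w + t := by omega
        zify at h5
        linarith
    refine ⟨e (Sym.mk (Finsupp.toMultiset f) hf), ?_⟩
    have hc : ∀ i : Fin d, Multiset.count i.succ
        (e.symm (e (Sym.mk (Finsupp.toMultiset f) hf)) : Multiset (Fin (d + 1))) = a i := by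
      intro i
      rw [Equiv.symm_apply_apply]
      change Multiset.count i.succ (Finsupp.toMultiset f) = a i
      rw [Finsupp.count_toMultiset]
      simp [f]
    simp only [hc]
    refine ⟨fun i => sub_nonneg.2 (key i).1, ?_⟩
    have hd' : (0 : ℤ) < d := by exact_mod_cast hd
    refine lt_of_mul_lt_mul_left ?_ hd'.le
    rw [Finset.mul_sum]
    have : Nonempty (Fin d) := ⟨⟨0, hd⟩⟩
    calc _ < ∑ i : Fin d, (t : ℤ) :=
          Finset.sum_lt_sum_of_nonempty Finset.univ_nonempty fun i _ => (key i).2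
      _ = d * t := by simp
end

section
/- Let k, r ∈ ℕ, let e₁,…,e_k be the standard basis of ℤ^k, and let B := {e₁,…,e_k}, so that for h ∈ ℕ₀ the h-fold sumset hB equals {x ∈ ℤ_{≥0}^k : x₁ + ⋯ + x_k = h}. Then for every h ∈ ℕ₀ there exists a set Y_h ⊆ ℤ^k with |Y_h| ≤ C((r+1)(k−1), k−1) such that rhB ⊆ Y_h + hB. -/
open Pointwise BigOperators

theorem mem_hfold_iff (k : ℕ) (n : ℕ) (x : Fin k → ℤ) :
    x ∈ hfold n (Set.range fun j : Fin k => (Pi.single j 1 : Fin k → ℤ)) ↔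
      (∀ i, 0 ≤ x i) ∧ ∑ i, x i = n := by
  induction n generalizing x with
  | zero =>
    simp only [hfold, Set.mem_singleton_iff, Nat.cast_zero]
    constructor
    · rintro rfl; simp
    · rintro ⟨h1, h2⟩
      rw [Finset.sum_eq_zero_iff_of_nonneg (fun i _ => h1 i)] at h2
      funext i
      exact h2 i (Finset.mem_univ i)
  | succ n ih =>
    simp only [hfold, Set.mem_add, Set.mem_range]
    constructor
    · rintro ⟨_, ⟨j, rfl⟩, z, hz, rfl⟩
      obtain ⟨h1, h2⟩ := (ih z).1 hz
      refine ⟨fun i => ?_, ?_⟩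
      · have : (0 : ℤ) ≤ (Pi.single j 1 : Fin k → ℤ) i := by
          by_cases hij : i = j
          · subst hij; simp
          · simp [hij]
        exact add_nonneg this (h1 i)
      · simp only [Pi.add_apply, Finset.sum_add_distrib, h2]
        push_cast
        simp
        ring
    · rintro ⟨h1, h2⟩
      obtain ⟨j, -, hj⟩ : ∃ j ∈ Finset.univ, 0 < x j := by
        by_contra hcon
        push Not at hcon
        have := Finset.sum_nonpos hcon
        push_cast at h2
        linarith
      refine ⟨Pi.single j 1, ⟨j, rfl⟩, x - Pi.single j 1, (ih _).2 ⟨fun i => ?_, ?_⟩, by simp⟩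
      · by_cases hij : i = j
        · subst hij; simp; omega
        · simp [hij, h1 i]
      · simp only [Pi.sub_apply, Finset.sum_sub_distrib, h2]
        push_cast
        simp

/-- Covering theorem in the free abelian group `ℤ^k` for the standard basis
`B = {e₁,…,e_k}`: for every `h` there is `Y_h` with
`|Y_h| ≤ C((r+1)(k−1), k−1)` and `(rh)B ⊆ Y_h + hB`. -/
theorem stmt5 (k r : ℕ) (hk : 0 < k) (hr : 0 < r) (h : ℕ) :
    ∃ Y : Finset (Fin k → ℤ),
      Y.card ≤ ((r + 1) * (k - 1)).choose (k - 1) ∧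
      hfold (r * h) (Set.range fun j : Fin k => (Pi.single j 1 : Fin k → ℤ)) ⊆
        ↑Y + hfold h (Set.range fun j : Fin k => (Pi.single j 1 : Fin k → ℤ)) := by
  classical
  obtain ⟨d, rfl⟩ : ∃ d, k = d + 1 := ⟨k - 1, by omega⟩
  simp only [Nat.add_sub_cancel]
  obtain ⟨m, hm0, hm1, hm2⟩ : ∃ m : ℕ, 0 < m ∧ d * (m - 1) ≤ h ∧ (d = 0 ∨ h ≤ d * m) := by
    refine ⟨h / d + 1, Nat.succ_pos _, ?_, ?_⟩
    · simpa using Nat.mul_div_le h d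
    · rcases Nat.eq_zero_or_pos d with h0 | h0
      · exact Or.inl h0
      · exact Or.inr (Nat.lt_mul_div_succ h h0).le
  have hmz : (0 : ℤ) < m := by exact_mod_cast hm0
  let g : (Fin (d + 1) →₀ ℕ) → (Fin (d + 1) → ℤ) := fun q =>
    Fin.cons (((r : ℤ) - 1) * h - ∑ i : Fin d, (m : ℤ) * q i.succ) (fun i => (m : ℤ) * q i.succ)
  refine ⟨((Finset.univ : Finset (Fin (d + 1))).finsuppAntidiag (r * d)).image g, ?_, ?_⟩
  · refine Finset.card_image_le.trans ?_
    rw [Finset.card_finsuppAntidiag_nat_eq_multichoose, Nat.multichoose_eq]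
    simp only [Finset.card_univ, Fintype.card_fin]
    have e1 : d + 1 + r * d - 1 = d + r * d := by omega
    have e2 : (r + 1) * d = d + r * d := by ring
    rw [e1, e2, Nat.choose_symm_add]
  · intro x hx
    obtain ⟨h1, h2⟩ := (mem_hfold_iff _ _ _).1 hx
    rw [Fin.sum_univ_succ] at h2
    push_cast at h2
    let p : Fin d → ℕ := fun i => (x i.succ / m).toNat
    have hp : ∀ i, (p i : ℤ) = x i.succ / m := fun i =>
      Int.toNat_of_nonneg (Int.ediv_nonneg (h1 _) hmz.le)
    have hps : ∑ i, p i ≤ r * d := by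
      rcases hm2 with h0 | h0
      · subst h0; simp
      · have a1 : (m : ℤ) * ∑ i, (p i : ℤ) ≤ ∑ i : Fin d, x i.succ := by
          rw [Finset.mul_sum]
          refine Finset.sum_le_sum fun i _ => ?_
          rw [hp]
          exact Int.mul_ediv_self_le hmz.ne'
        have a2 : (h : ℤ) ≤ d * m := by exact_mod_cast h0
        have a3 : (r : ℤ) * h ≤ r * (d * m) := mul_le_mul_of_nonneg_left a2 (by positivity)
        have a4 : (m : ℤ) * ∑ i, (p i : ℤ) ≤ m * (r * d) := by
          have := h1 0
          linarith
        have := le_of_mul_le_mul_left a4 hmz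
        exact_mod_cast this
    let q : Fin (d + 1) →₀ ℕ := Finsupp.equivFunOnFinite.symm
      (Fin.cons (r * d - ∑ i, p i) p)
    have hq : ∀ i : Fin d, q i.succ = p i := fun i => by simp [q]
    have hq0 : q 0 = r * d - ∑ i, p i := by simp [q]
    refine Set.mem_add.2 ⟨g q, ?_, x - g q, (mem_hfold_iff _ _ _).2 ⟨?_, ?_⟩, by simp⟩
    · refine Finset.mem_coe.2 (Finset.mem_image_of_mem g ?_)
      rw [Finset.mem_finsuppAntidiag]
      refine ⟨?_, Finset.subset_univ _⟩
      rw [Fin.sum_univ_succ, hq0]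
      simp only [hq]
      omega
    · have hmod : ∀ i : Fin d, x i.succ - m * (p i : ℤ) = x i.succ % m := fun i => by
        rw [hp, Int.emod_def]
      intro i
      refine Fin.cases ?_ (fun i => ?_) i
      · simp only [g, Pi.sub_apply, Fin.cons_zero, hq]
        have b : ∑ i : Fin d, (x i.succ - m * (p i : ℤ)) ≤ ∑ i : Fin d, ((m : ℤ) - 1) := by
          refine Finset.sum_le_sum fun i _ => ?_
          rw [hmod]
          have := Int.emod_lt_of_pos (x i.succ) hmz
          omega
        rw [Finset.sum_sub_distrib] at b
        simp only [Finset.sum_const, Finset.card_univ, Fintype.card_fin, nsmul_eq_mul] at b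
        have c : (d : ℤ) * (m - 1) ≤ h := by
          have : ((d * (m - 1) : ℕ) : ℤ) ≤ h := by exact_mod_cast hm1
          rwa [Nat.cast_mul, Nat.cast_sub hm0, Nat.cast_one] at this
        linarith
      · simp only [g, Pi.sub_apply, Fin.cons_succ, hq, hmod]
        exact Int.emod_nonneg _ hmz.ne'
    · rw [Fin.sum_univ_succ]
      simp only [g, Pi.sub_apply, Fin.cons_succ, Fin.cons_zero, Finset.sum_sub_distrib]
      linarith
end

section
/- Let G be an abelian group and let A ⊆ G be a finite nonempty set with |A| = k. Then for every r ∈ ℕ and every h ∈ ℕ₀ there exists a set X_h ⊆ G with |X_h| ≤ C((r+1)(k−1), k−1) such that r(hA) ⊆ X_h + hA. -/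
open Pointwise BigOperators

/-- Representation of elements of an iterated sumset relative to a base point. -/
def RepS {G : Type*} [AddCommGroup G] (B : Finset G) (a : G) (m : ℕ) (g : G) : Prop :=
  ∃ x : G → ℕ, ∑ b ∈ B, x b ≤ m ∧ g = m • a + ∑ b ∈ B, x b • (b - a)

theorem repS_hfold {G : Type*} [AddCommGroup G] (B : Finset G) (a : G) (S : Set G) (m : ℕ)
    (hS : ∀ g ∈ S, RepS B a m g) (r : ℕ) : ∀ g ∈ hfold r S, RepS B a (r * m) g := by
  induction r with
  | zero =>
    intro g hg
    have hg0 : g = 0 := by simpa [hfold] using hg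
    exact ⟨fun _ => 0, by simp, by simp [hg0]⟩
  | succ r ih =>
    intro g hg
    obtain ⟨u, hu, v, hv, rfl⟩ := Set.mem_add.1 hg
    obtain ⟨x, hx, rfl⟩ := hS u hu
    obtain ⟨y, hy, rfl⟩ := ih v hv
    refine ⟨fun b => x b + y b, ?_, ?_⟩
    · rw [Finset.sum_add_distrib, Nat.succ_mul]; omega
    · simp only [add_smul, Finset.sum_add_distrib, Nat.succ_mul]
      abel

theorem hfold_of_repS {G : Type*} [AddCommGroup G] (A : Set G) (B : Finset G) (a : G)
    (ha : a ∈ A) (hB : ∀ b ∈ B, b ∈ A) (m : ℕ) : ∀ g, RepS B a m g → g ∈ hfold m A := by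
  classical
  induction m with
  | zero =>
    rintro g ⟨x, hx, rfl⟩
    have h0 : ∀ b ∈ B, x b = 0 := by
      intro b hb
      have := Finset.single_le_sum (f := x) (fun i _ => Nat.zero_le _) hb
      omega
    have : ∑ b ∈ B, x b • (b - a) = 0 :=
      Finset.sum_eq_zero fun b hb => by rw [h0 b hb, zero_smul]
    simp [hfold, this]
  | succ m ih =>
    rintro g ⟨x, hx, rfl⟩
    by_cases hle : ∑ b ∈ B, x b ≤ m
    · refine Set.mem_add.2 ⟨a, ha, _, ih _ ⟨x, hle, rfl⟩, ?_⟩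
      rw [add_smul, one_smul]; abel
    · have : ∃ c ∈ B, x c ≠ 0 := by
        by_contra! hc
        exact hle (by rw [Finset.sum_eq_zero hc]; omega)
      obtain ⟨c, hc, hxc⟩ := this
      let z : G → ℕ := fun b => if b = c then 1 else 0
      let y : G → ℕ := fun b => x b - z b
      have hxy : ∀ b, x b = y b + z b := by
        intro b
        simp only [y, z]
        split_ifs with hbc
        · subst hbc; omega
        · omega
      have hs : ∑ b ∈ B, x b = ∑ b ∈ B, y b + 1 := by
        rw [Finset.sum_congr rfl fun b _ => hxy b, Finset.sum_add_distrib]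
        simp [z, hc]
      have hs2 : ∑ b ∈ B, x b • (b - a) = ∑ b ∈ B, y b • (b - a) + (c - a) := by
        rw [Finset.sum_congr rfl fun b _ => by rw [hxy b, add_smul], Finset.sum_add_distrib]
        simp [z, hc]
      refine Set.mem_add.2 ⟨c, hB c hc, _, ih _ ⟨y, by omega, rfl⟩, ?_⟩
      rw [hs2, add_smul, one_smul]; abel

theorem hfold_multiset {G : Type*} [AddCommGroup G] (A : Set G) (m : ℕ) :
    ∀ g ∈ hfold m A, ∃ s : Multiset A, s.card = m ∧ (s.map Subtype.val).sum = g := by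
  induction m with
  | zero =>
    intro g hg
    have hg0 : g = 0 := by simpa [hfold] using hg
    exact ⟨0, by simp, by simp [hg0]⟩
  | succ m ih =>
    intro g hg
    obtain ⟨u, hu, v, hv, rfl⟩ := Set.mem_add.1 hg
    obtain ⟨s, hs, rfl⟩ := ih v hv
    exact ⟨⟨u, hu⟩ ::ₘ s, by simp [hs], by simp⟩

theorem hfold_card {G : Type*} [AddCommGroup G] (A : Set G) (hfin : A.Finite) (m : ℕ) :
    ∃ F : Finset G, F.card ≤ (A.ncard + m - 1).choose m ∧ ∀ g ∈ hfold m A, g ∈ F := by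
  classical
  have := hfin.fintype
  refine ⟨(Finset.univ : Finset (Sym A m)).image fun s : Sym A m => (s.1.map Subtype.val).sum,
    ?_, ?_⟩
  · refine Finset.card_image_le.trans ?_
    rw [Finset.card_univ, Sym.card_sym_eq_choose, ← Nat.card_eq_fintype_card,
      Nat.card_coe_set_eq]
  · intro g hg
    obtain ⟨s, hs, rfl⟩ := hfold_multiset A m g hg
    exact Finset.mem_image.2 ⟨⟨s, hs⟩, Finset.mem_univ _, rfl⟩

/-- Finite subsets of an arbitrary abelian group: if `|A| = k`, then for every `r ∈ ℕ`
and `h ∈ ℕ₀` there is `X_h ⊆ G` with `|X_h| ≤ C((r+1)(k−1), k−1)` and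
`r(hA) ⊆ X_h + hA`. -/
theorem stmt6 {G : Type*} [AddCommGroup G] (A : Set G) (k : ℕ)
    (hfin : A.Finite) (hne : A.Nonempty) (hcard : A.ncard = k)
    (r : ℕ) (hr : 0 < r) (h : ℕ) :
    ∃ X : Finset G, X.card ≤ ((r + 1) * (k - 1)).choose (k - 1) ∧
      hfold r (hfold h A) ⊆ ↑X + hfold h A := by
  classical
  obtain ⟨a, ha⟩ := hne
  let B : Finset G := hfin.toFinset.erase a
  have haF : a ∈ hfin.toFinset := by simpa using ha
  have hBA : ∀ b ∈ B, b ∈ A := fun b hb => by simpa using Finset.mem_of_mem_erase hb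
  obtain ⟨n, hn⟩ : ∃ n, n = B.card := ⟨_, rfl⟩
  have hk : k = n + 1 := by
    rw [hn, Finset.card_erase_add_one haF, ← hcard, Set.ncard_eq_toFinset_card A hfin]
  have hA1 : ∀ g ∈ A, RepS B a 1 g := by
    intro g hg
    by_cases hga : g = a
    · exact ⟨fun _ => 0, by simp, by simp [hga]⟩
    · have hgB : g ∈ B := Finset.mem_erase.2 ⟨hga, by simpa using hg⟩
      exact ⟨fun b => if b = g then 1 else 0, by simp [hgB], by simp [hgB]⟩
  have hAh : ∀ g ∈ hfold h A, RepS B a h g := by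
    have := repS_hfold B a A 1 hA1 h
    rwa [mul_one] at this
  obtain ⟨F, hF, hFm⟩ := hfold_card A hfin (r * n)
  obtain ⟨d, hd⟩ : ∃ d, d = h / n + 1 := ⟨_, rfl⟩
  refine ⟨F.image fun u => (r * h) • a - h • a + d • (u - (r * n) • a), ?_, ?_⟩
  · refine Finset.card_image_le.trans (hF.trans ?_)
    rw [hcard, hk, Nat.add_sub_cancel]
    have e1 : n + 1 + r * n - 1 = r * n + n := by omega
    have e2 : (r + 1) * n = r * n + n := by ring
    rw [e1, e2, Nat.choose_symm_add]
  · intro g hg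
    obtain ⟨x, hx, rfl⟩ := repS_hfold B a _ h hAh r g hg
    have hdpos : 0 < d := by rw [hd]; exact Nat.succ_pos _
    have hmod : ∑ b ∈ B, x b % d ≤ h := by
      calc ∑ b ∈ B, x b % d ≤ ∑ b ∈ B, h / n :=
            Finset.sum_le_sum fun b _ => by
              have := Nat.mod_lt (x b) hdpos
              exact Nat.le_of_lt_succ (this.trans_eq hd)
        _ = n * (h / n) := by rw [Finset.sum_const, smul_eq_mul, hn]
        _ ≤ h := Nat.mul_div_le h n
    have hdiv : ∑ b ∈ B, x b / d ≤ r * n := by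
      rcases Nat.eq_zero_or_pos n with h0 | hpos
      · have : B = ∅ := Finset.card_eq_zero.1 (by omega)
        simp [this]
      · have hlt : h ≤ n * d := by
          rw [hd]
          exact (Nat.lt_mul_div_succ h hpos).le
        have h1 : d * ∑ b ∈ B, x b / d ≤ ∑ b ∈ B, x b := by
          rw [Finset.mul_sum]
          exact Finset.sum_le_sum fun b _ => Nat.mul_div_le _ _
        have h2 : d * ∑ b ∈ B, x b / d ≤ d * (r * n) := by
          calc _ ≤ r * h := h1.trans hx
            _ ≤ r * (n * d) := Nat.mul_le_mul_left _ hlt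
            _ = d * (r * n) := by ring
        exact Nat.le_of_mul_le_mul_left h2 hdpos
    have hu := hfold_of_repS A B a ha hBA (r * n) _ ⟨fun b => x b / d, hdiv, rfl⟩
    have hv := hfold_of_repS A B a ha hBA h _ ⟨fun b => x b % d, hmod, rfl⟩
    refine Set.mem_add.2 ⟨_, Finset.mem_coe.2 (Finset.mem_image_of_mem _ (hFm _ hu)), _, hv, ?_⟩
    have hsum : ∑ b ∈ B, x b • (b - a) =
        d • ∑ b ∈ B, (x b / d) • (b - a) + ∑ b ∈ B, (x b % d) • (b - a) := by
      rw [Finset.smul_sum, ← Finset.sum_add_distrib]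
      refine Finset.sum_congr rfl fun b _ => ?_
      rw [smul_smul, ← add_smul, Nat.div_add_mod]
    rw [hsum, add_sub_cancel_left]
    abel
end

section
/- (Finite-tuple covering theorem.) Let 𝒜 = (A₁,…,A_q) be a tuple of finite nonempty subsets of an abelian group G, with |A_i| = k_i for 1 ≤ i ≤ q. Then for every r ∈ ℕ and every h ∈ ℕ₀^q there exists a set X_h ⊆ G such that (rh)·𝒜 ⊆ X_h + h·𝒜 and |X_h| ≤ ∏_{i=1}^q C((r+1)(k_i−1), k_i−1). In particular, every finite tuple is a chromatic (r,ℓ)-approximate group with ℓ = ∏_{i=1}^q C((r+1)(k_i−1), k_i−1). -/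
open Pointwise BigOperators

theorem mem_hfold_iff_s7 {G : Type*} [AddCommGroup G] (A : Set G) [Fintype A] (N : ℕ) (x : G) :
    x ∈ hfold N A ↔ ∃ f : A → ℕ, ∑ a, f a = N ∧ ∑ a, f a • (a : G) = x := by
  classical
  induction N generalizing x with
  | zero =>
    simp only [hfold, Set.mem_singleton_iff]
    constructor
    · rintro rfl
      exact ⟨0, by simp, by simp⟩
    · rintro ⟨f, hf, rfl⟩
      simp only [Finset.sum_eq_zero_iff, Finset.mem_univ, true_imp_iff] at hf
      simp [hf]
  | succ N ih =>
    simp only [hfold, Set.mem_add]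
    constructor
    · rintro ⟨a, ha, y, hy, rfl⟩
      obtain ⟨f, hf, rfl⟩ := (ih y).1 hy
      refine ⟨f + Pi.single ⟨a, ha⟩ 1, ?_, ?_⟩
      · simp [Finset.sum_add_distrib, hf]
      · simp [Finset.sum_add_distrib, add_smul, Pi.single_apply, ite_smul, add_comm]
    · rintro ⟨f, hf, rfl⟩
      obtain ⟨a, -, ha⟩ : ∃ a ∈ Finset.univ, f a ≠ 0 := by
        apply Finset.exists_ne_zero_of_sum_ne_zero
        omega
      obtain ⟨g, rfl⟩ : ∃ g : A → ℕ, f = g + Pi.single a 1 := by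
        refine ⟨fun b => f b - (Pi.single a 1 : A → ℕ) b, ?_⟩
        funext b
        rw [Pi.add_apply, Pi.single_apply]
        split_ifs with hb
        · subst hb
          omega
        · simp
      simp [Finset.sum_add_distrib] at hf
      refine ⟨a, a.2, ∑ b, g b • (b : G), (ih _).2 ⟨g, hf, rfl⟩, ?_⟩
      simp [Finset.sum_add_distrib, add_smul, Pi.single_apply, ite_smul, add_comm]

theorem sum_shift {G α : Type*} [AddCommGroup G] [Fintype α] (v : α → G) (f : α → ℕ) (c : G) :
    ∑ a, f a • v a = (∑ a, f a) • c + ∑ a, f a • (v a - c) := by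
  simp [smul_sub, Finset.sum_smul]

theorem cover_one {G : Type*} [AddCommGroup G] (A : Set G) (hfin : A.Finite)
    (hne : A.Nonempty) (r : ℕ) (hr : 0 < r) (h : ℕ) :
    ∃ X : Finset G, X.card ≤ ((r + 1) * (A.ncard - 1)).choose (A.ncard - 1) ∧
      hfold (r * h) A ⊆ ↑X + hfold h A := by
  classical
  obtain ⟨c, hc⟩ := hne
  have : Fintype A := hfin.fintype
  obtain ⟨n, hn⟩ : ∃ n, A.ncard = n + 1 :=
    Nat.exists_eq_add_one_of_ne_zero (Set.ncard_ne_zero_of_mem hc hfin)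
  have hcard : Fintype.card A = n + 1 := by
    rw [← hn, Set.ncard_eq_toFinset_card', Set.toFinset_card]
  rw [hn, Nat.add_sub_cancel]
  let E := Sym.equivNatSumOfFintype A (r * n)
  set m := h / n with hm
  let F : Sym A (r * n) → G := fun s =>
    (r * h - h) • c + (m + 1) • ∑ a, ((E s).1 a) • ((a : G) - c)
  let c' : A := ⟨c, hc⟩
  have hec : (Finset.univ.erase c').card = n := by
    rw [Finset.card_erase_of_mem (Finset.mem_univ _), Finset.card_univ, hcard]; simp
  have extend : ∀ (u : A → ℕ) (T : ℕ), ∑ a ∈ Finset.univ.erase c', u a ≤ T →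
      ∃ w : A → ℕ, ∑ a, w a = T ∧ ∀ a, a ≠ c' → w a = u a := by
    intro u T hT
    refine ⟨Function.update u c' (T - ∑ a ∈ Finset.univ.erase c', u a), ?_, ?_⟩
    · rw [← Finset.sum_erase_add _ _ (Finset.mem_univ c')]
      rw [Finset.sum_congr rfl (g := u)]
      · rw [Function.update_self]
        exact Nat.add_sub_cancel' hT
      · intro a ha
        simp [Finset.ne_of_mem_erase ha]
    · intro a ha
      simp [ha]
  refine ⟨Finset.univ.image F, ?_, ?_⟩
  · refine Finset.card_image_le.trans ?_
    rw [Finset.card_univ, Sym.card_sym_eq_choose, hcard]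
    have e : n + 1 + r * n - 1 = r * n + n := by omega
    rw [e, Nat.choose_symm_add, add_mul, one_mul]
  · intro x hx
    obtain ⟨f, hf, rfl⟩ := (mem_hfold_iff_s7 A _ x).1 hx
    obtain ⟨z, hz, hz'⟩ := extend (fun a => f a / (m + 1)) (r * n) (by
      rcases Nat.eq_zero_or_pos n with h0 | hnpos
      · rw [h0, Finset.card_eq_zero] at hec
        simp [hec]
      have h1 : (m + 1) * ∑ a ∈ Finset.univ.erase c', f a / (m + 1) ≤ r * h := by
        rw [Finset.mul_sum, ← hf]
        refine (Finset.sum_le_sum fun a _ => Nat.mul_div_le _ _).trans ?_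
        exact Finset.sum_le_sum_of_subset (Finset.erase_subset _ _)
      have h2 : h ≤ (m + 1) * n := by
        have := Nat.lt_mul_div_succ h hnpos
        rw [← hm] at this
        rw [mul_comm]; exact this.le
      have h3 : (m + 1) * ∑ a ∈ Finset.univ.erase c', f a / (m + 1) ≤ (m + 1) * (r * n) := by
        calc _ ≤ r * h := h1
          _ ≤ r * ((m + 1) * n) := Nat.mul_le_mul_left _ h2
          _ = _ := by ring
      exact Nat.le_of_mul_le_mul_left h3 (Nat.succ_pos m))
    obtain ⟨g, hg, hg'⟩ := extend (fun a => f a % (m + 1)) h (by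
      calc ∑ a ∈ Finset.univ.erase c', f a % (m + 1) ≤ ∑ a ∈ Finset.univ.erase c', m :=
            Finset.sum_le_sum fun a _ => Nat.lt_succ_iff.1 (Nat.mod_lt _ (Nat.succ_pos m))
        _ = n * (h / n) := by rw [Finset.sum_const, hec, smul_eq_mul]
        _ ≤ h := Nat.mul_div_le _ _)
    refine Set.mem_add.2 ⟨F (E.symm ⟨z, hz⟩), by simp, _,
      (mem_hfold_iff_s7 A h _).2 ⟨g, hg, rfl⟩, ?_⟩
    simp only [F, Equiv.apply_symm_apply]
    rw [sum_shift (fun a : A => (a : G)) f c, sum_shift (fun a : A => (a : G)) g c, hf, hg]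
    have h1 : ∑ a, f a • ((a : G) - c) =
        (m + 1) • ∑ a, z a • ((a : G) - c) + ∑ a, g a • ((a : G) - c) := by
      rw [Finset.smul_sum, ← Finset.sum_add_distrib]
      refine Finset.sum_congr rfl fun a _ => ?_
      by_cases ha : a = c'
      · simp [ha, c']
      · rw [hz' a ha, hg' a ha, smul_smul, ← add_smul, Nat.div_add_mod]
    have h2 : (r * h) • c = (r * h - h) • c + h • c := by
      rw [← add_smul, Nat.sub_add_cancel (Nat.le_mul_of_pos_left h hr)]
    rw [h1, h2]
    abel

/-- Finite-tuple covering theorem: for a tuple of finite nonempty sets with `|Aᵢ| = kᵢ`,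
for every `r` and every chromatic parameter `h` there is `X_h` with
`(rh)·𝒜 ⊆ X_h + h·𝒜` and `|X_h| ≤ ∏ᵢ C((r+1)(kᵢ−1), kᵢ−1)`; in particular `𝒜` is a
chromatic `(r, ∏ᵢ C((r+1)(kᵢ−1), kᵢ−1))`-approximate group. -/
theorem stmt7 {G : Type*} [AddCommGroup G] {q : ℕ} (A : Fin q → Set G) (k : Fin q → ℕ)
    (hfin : ∀ i, (A i).Finite) (hne : ∀ i, (A i).Nonempty)
    (hcard : ∀ i, (A i).ncard = k i) (r : ℕ) (hr : 0 < r) :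
    ∀ h : Fin q → ℕ,
      ∃ X : Finset G, X.card ≤ ∏ i, ((r + 1) * (k i - 1)).choose (k i - 1) ∧
        chromSum (fun i => r * h i) A ⊆ ↑X + chromSum h A := by
  classical
  intro h
  choose X hX hsub using fun i => cover_one (A i) (hfin i) (hne i) r hr (h i)
  refine ⟨∑ i, X i, ?_, ?_⟩
  · have key : ∀ s : Finset (Fin q), (∑ i ∈ s, X i).card ≤ ∏ i ∈ s, (X i).card := by
      intro s
      induction s using Finset.induction_on with
      | empty => simp
      | insert a s ha ih =>
        rw [Finset.sum_insert ha, Finset.prod_insert ha]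
        exact Finset.card_add_le.trans (Nat.mul_le_mul_left _ ih)
    refine (key _).trans (Finset.prod_le_prod' fun i _ => ?_)
    simpa [hcard i] using hX i
  · unfold chromSum
    rw [Finset.coe_sum, ← Finset.sum_add_distrib]
    intro x hx
    rw [Set.mem_fintype_sum] at hx ⊢
    obtain ⟨g, hg, rfl⟩ := hx
    exact ⟨g, fun i => hsub i (hg i), rfl⟩
end

section
/- Let r ∈ ℕ and let G be an abelian group. Suppose that for each color i (1 ≤ i ≤ q), A_i = a_i + M_i, where a_i ∈ G and M_i ⊆ G is a submonoid (0 ∈ M_i and M_i + M_i ⊆ M_i). Then for every h = (h₁,…,h_q) ∈ ℕ₀^q, (rh)·𝒜 = (r−1)·(Σ_{i=1}^q h_i a_i) + h·𝒜, where the translate is by the group element (r−1)Σ h_i a_i. Consequently 𝒜 is a chromatic (r,1)-approximate group. -/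
open Pointwise BigOperators

theorem hfold_translate {G : Type*} [AddCommGroup G] (a : G) (M : Set G)
    (h0 : (0 : G) ∈ M) (hadd : M + M ⊆ M) (n : ℕ) :
    hfold (n + 1) ({a} + M) = {(n + 1) • a} + M := by
  have hMM : M + M = M := Set.Subset.antisymm hadd
    (fun x hx => Set.mem_add.2 ⟨0, h0, x, hx, zero_add x⟩)
  induction n with
  | zero =>
    show ({a} + M) + {0} = _
    simp
  | succ n ih =>
    show ({a} + M) + hfold (n + 1) ({a} + M) = _
    rw [ih, add_add_add_comm, hMM, Set.singleton_add_singleton, succ_nsmul' a (n + 1)]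

theorem hfold_mul {G : Type*} [AddCommGroup G] (a : G) (M : Set G)
    (h0 : (0 : G) ∈ M) (hadd : M + M ⊆ M) (r n : ℕ) (hr : 0 < r) :
    hfold (r * n) ({a} + M) = {(r - 1) • n • a} + hfold n ({a} + M) := by
  obtain ⟨s, rfl⟩ : ∃ s, r = s + 1 := ⟨r - 1, by omega⟩
  cases n with
  | zero => simp [hfold]
  | succ n =>
    have e : (s + 1) * (n + 1) = (s * (n + 1) + n) + 1 := by ring
    rw [e, hfold_translate a M h0 hadd, hfold_translate a M h0 hadd, ← add_assoc,
      Set.singleton_add_singleton, Nat.add_sub_cancel, ← mul_nsmul', ← add_nsmul]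
    rfl

theorem sum_singleton_set {G : Type*} [AddCommGroup G] {q : ℕ} (f : Fin q → G) :
    ∑ i, ({f i} : Set G) = {∑ i, f i} :=
  (map_sum (Set.singletonAddMonoidHom : G →+ Set G) f Finset.univ).symm

/-- Translated submonoids: if `Aᵢ = aᵢ + Mᵢ` with `Mᵢ` a submonoid, then
`(rh)·𝒜 = (r−1)(∑ᵢ hᵢaᵢ) + h·𝒜`; consequently `𝒜` is a chromatic
`(r,1)`-approximate group. -/
theorem stmt8 {G : Type*} [AddCommGroup G] {q : ℕ} (r : ℕ) (hr : 0 < r)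
    (a : Fin q → G) (M : Fin q → Set G)
    (hM0 : ∀ i, (0 : G) ∈ M i) (hMadd : ∀ i, M i + M i ⊆ M i)
    (A : Fin q → Set G) (hA : ∀ i, A i = {a i} + M i) (h : Fin q → ℕ) :
    chromSum (fun i => r * h i) A = {(r - 1) • ∑ i, h i • a i} + chromSum h A ∧
    ∃ X : Finset G, X.card ≤ 1 ∧
      chromSum (fun i => r * h i) A ⊆ ↑X + chromSum h A := by
  have key : chromSum (fun i => r * h i) A
      = {(r - 1) • ∑ i, h i • a i} + chromSum h A := by
    unfold chromSum
    rw [Finset.smul_sum, ← sum_singleton_set, ← Finset.sum_add_distrib]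
    refine Finset.sum_congr rfl fun i _ => ?_
    rw [hA i]
    exact hfold_mul (a i) (M i) (hM0 i) (hMadd i) r (h i) hr
  refine ⟨key, {(r - 1) • ∑ i, h i • a i}, by simp, ?_⟩
  rw [key, Finset.coe_singleton]
end

section
/- (Approximate submonoid variant.) Let r ∈ ℕ, let G be an abelian group, and let 𝒜 = (A₁,…,A_q) with A_i = a_i + M_i for each i, where a_i ∈ G and M_i ⊆ G is a K_i-approximate submonoid for some K_i ∈ ℕ. Then for every h = (h₁,…,h_q) ∈ ℕ₀^q there exists a finite set X_h ⊆ G such that (rh)·𝒜 ⊆ X_h + h·𝒜 and |X_h| ≤ ∏_{i : h_i > 0} C((r−1)h_i + K_i − 1, K_i − 1). -/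
open Pointwise BigOperators

theorem hfold_cover {G : Type*} [AddCommGroup G] [DecidableEq G] (F : Finset G) (n : ℕ) :
    ∃ X : Finset G, X.card ≤ Nat.multichoose F.card n ∧ hfold n (F : Set G) ⊆ ↑X := by
  let φ : Sym F n → G := fun m => ((m : Multiset F).map (fun x : F => (x : G))).sum
  refine ⟨Finset.univ.image φ, ?_, ?_⟩
  · refine Finset.card_image_le.trans ?_
    rw [Finset.card_univ, Sym.card_sym_eq_multichoose, Fintype.card_coe]
  · suffices H : ∀ n : ℕ, ∀ x ∈ hfold n (F : Set G), ∃ m : Sym F n,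
        ((m : Multiset F).map (fun x : F => (x : G))).sum = x by
      intro x hx
      obtain ⟨m, hm⟩ := H n x hx
      simp only [Finset.coe_image, Set.mem_image, Finset.mem_coe]
      exact ⟨m, Finset.mem_univ _, hm⟩
    intro n
    induction n with
    | zero =>
      intro x hx
      have hx : x = 0 := hx
      exact ⟨Sym.nil, by simp [hx]⟩
    | succ n ih =>
      rintro x ⟨f, hf, y, hy, rfl⟩
      obtain ⟨m, rfl⟩ := ih y hy
      exact ⟨(⟨f, hf⟩ : F) ::ₛ m, by
        rw [Sym.coe_cons, Multiset.map_cons, Multiset.sum_cons]⟩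

theorem multichoose_mono_left' {k K : ℕ} (n : ℕ) (hkK : k ≤ K) :
    Nat.multichoose k n ≤ Nat.multichoose K n := by
  rw [Nat.multichoose_eq, Nat.multichoose_eq]
  exact Nat.choose_le_choose _ (by omega)

theorem hfold_single_add {G : Type*} [AddCommGroup G] (a : G) (M : Set G) (n : ℕ) :
    hfold n ({a} + M) = {n • a} + hfold n M := by
  induction n with
  | zero => simp [hfold]
  | succ n ih =>
    simp only [hfold, ih]
    rw [add_add_add_comm, Set.singleton_add_singleton, succ_nsmul, add_comm a]

theorem hfold_absorb {G : Type*} [AddCommGroup G] (F M : Set G) (hF : M + M ⊆ F + M) (n h : ℕ) :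
    hfold (n + (h + 1)) M ⊆ hfold n F + hfold (h + 1) M := by
  induction n with
  | zero => simp [hfold]
  | succ n ih =>
    rw [show n + 1 + (h + 1) = (n + (h + 1)) + 1 by omega]
    calc hfold (n + (h+1) + 1) M = M + hfold (n + (h+1)) M := rfl
      _ ⊆ M + (hfold n F + hfold (h+1) M) := Set.add_subset_add_left ih
      _ = (M + M) + (hfold n F + hfold h M) := by
        simp only [hfold]; abel
      _ ⊆ (F + M) + (hfold n F + hfold h M) := Set.add_subset_add_right hF
      _ = hfold (n+1) F + hfold (h+1) M := by
        simp only [hfold]; abel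

theorem one_color {G : Type*} [AddCommGroup G] (r : ℕ) (hr : 0 < r) (a : G) (M : Set G)
    (K : ℕ) (hK : 0 < K) (happ : ∃ F : Finset G, F.card ≤ K ∧ M + M ⊆ ↑F + M) (h : ℕ) :
    ∃ X : Finset G, X.card ≤ (if 0 < h then ((r - 1) * h + K - 1).choose (K - 1) else 1) ∧
      hfold (r * h) ({a} + M) ⊆ (X : Set G) + hfold h ({a} + M) := by
  classical
  rcases h with _ | h
  · exact ⟨{0}, by simp, by simp [hfold]⟩
  obtain ⟨F, hFK, hF⟩ := happ
  obtain ⟨s, rfl⟩ : ∃ s, r = s + 1 := ⟨r - 1, by omega⟩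
  set n := s * (h + 1) with hn
  have e : (s + 1) * (h + 1) = n + (h + 1) := by rw [hn]; ring
  obtain ⟨X, hXc, hX⟩ := hfold_cover F n
  refine ⟨{n • a} + X, ?_, ?_⟩
  · rw [if_pos (Nat.succ_pos h)]
    calc _ ≤ _ := Finset.card_add_le
      _ ≤ Nat.multichoose F.card n := by rwa [Finset.card_singleton, one_mul]
      _ ≤ Nat.multichoose K n := multichoose_mono_left' n hFK
      _ = _ := by
        rw [Nat.multichoose_eq, Nat.add_sub_cancel, ← hn, add_comm K n]
        exact (Nat.choose_symm_of_eq_add (by omega))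
  · rw [e, hfold_single_add, hfold_single_add, Finset.coe_add, Finset.coe_singleton]
    calc _ ⊆ {(n + (h+1)) • a} + (hfold n (F : Set G) + hfold (h + 1) M) :=
          Set.add_subset_add_left (hfold_absorb _ _ hF n h)
      _ = ({n • a} + hfold n (F : Set G)) + ({(h+1) • a} + hfold (h+1) M) := by
          rw [add_nsmul, ← Set.singleton_add_singleton, add_add_add_comm]
      _ ⊆ _ := Set.add_subset_add_right (Set.add_subset_add_left hX)

theorem combine {G ι : Type*} [AddCommGroup G] (s : Finset ι) (B C : ι → Set G) (c : ι → ℕ)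
    (H : ∀ i, ∃ X : Finset G, X.card ≤ c i ∧ B i ⊆ ↑X + C i) :
    ∃ X : Finset G, X.card ≤ ∏ i ∈ s, c i ∧ ∑ i ∈ s, B i ⊆ ↑X + ∑ i ∈ s, C i := by
  classical
  induction s using Finset.induction_on with
  | empty => exact ⟨{0}, by simp, by simp⟩
  | insert i s hi ih =>
    obtain ⟨X, hX, hX'⟩ := ih
    obtain ⟨Y, hY, hY'⟩ := H i
    refine ⟨Y + X, ?_, ?_⟩
    · rw [Finset.prod_insert hi]
      exact Finset.card_add_le.trans (Nat.mul_le_mul hY hX)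
    · rw [Finset.sum_insert hi, Finset.sum_insert hi, Finset.coe_add, add_add_add_comm]
      exact Set.add_subset_add hY' hX'

/-- Approximate submonoid variant: if `Aᵢ = aᵢ + Mᵢ` with `Mᵢ` a `Kᵢ`-approximate
submonoid, then for every `h` there is a finite `X_h` with `(rh)·𝒜 ⊆ X_h + h·𝒜` and
`|X_h| ≤ ∏_{i : hᵢ>0} C((r−1)hᵢ + Kᵢ − 1, Kᵢ − 1)`. -/
theorem stmt9 {G : Type*} [AddCommGroup G] {q : ℕ} (r : ℕ) (hr : 0 < r)
    (a : Fin q → G) (M : Fin q → Set G) (K : Fin q → ℕ) (hK : ∀ i, 0 < K i)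
    (hM0 : ∀ i, (0 : G) ∈ M i)
    (happrox : ∀ i, ∃ F : Finset G, F.card ≤ K i ∧ M i + M i ⊆ ↑F + M i)
    (A : Fin q → Set G) (hA : ∀ i, A i = {a i} + M i) (h : Fin q → ℕ) :
    ∃ X : Finset G,
      X.card ≤ ∏ i ∈ Finset.univ.filter (fun i => 0 < h i),
        ((r - 1) * h i + K i - 1).choose (K i - 1) ∧
      chromSum (fun i => r * h i) A ⊆ ↑X + chromSum h A := by
  rw [Finset.prod_filter]
  refine combine Finset.univ _ _ _ (fun i => ?_)
  rw [hA i]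
  exact one_color r hr (a i) (M i) (K i) (hK i) (happrox i) (h i)
end

section
/- (One-color theorem for unions of unbounded linear sets.) Let G be an abelian group and let A ⊆ G be a union of k unbounded linear sets. Then for every r ∈ ℕ, the set A is an asymptotic (r, C((r+1)(k−1), k−1))-approximate group; moreover the covering condition holds for every h ≥ r(k−1)² + k: there exists X_h ⊆ G with |X_h| ≤ C((r+1)(k−1), k−1) and r(hA) ⊆ X_h + hA. -/
open Pointwise BigOperators

/-- An unbounded linear set `P(a; b₁,…,b_d) = {a + n₁b₁ + ⋯ + n_d b_d : nⱼ ∈ ℕ₀}`. -/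
def IsUnboundedLinear {G : Type*} [AddCommMonoid G] (S : Set G) : Prop :=
  ∃ (d : ℕ) (a : G) (b : Fin d → G),
    S = {x | ∃ n : Fin d → ℕ, x = a + ∑ j, n j • b j}

lemma hfold_eq_nsmul {G : Type*} [AddCommMonoid G] (n : ℕ) (A : Set G) :
    hfold n A = n • A := by
  induction n with
  | zero => simp [hfold, Set.singleton_zero]
  | succ n ih => rw [hfold, ih, succ_nsmul, add_comm]

lemma hfold_hfold {G : Type*} [AddCommMonoid G] (r h : ℕ) (A : Set G) :
    hfold r (hfold h A) = hfold (r * h) A := by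
  simp only [hfold_eq_nsmul]
  rw [mul_comm, mul_nsmul]

/-- Normal form of the elements of `hfold n (⋃ P i)`. -/
lemma hfold_forward {G : Type*} [AddCommGroup G] {k : ℕ} (P : Fin k → Set G) (a : Fin k → G)
    (Γ : Fin k → AddSubmonoid G) (hP : ∀ i x, x ∈ P i ↔ ∃ c ∈ Γ i, x = a i + c) (n : ℕ) :
    ∀ x ∈ hfold n (⋃ i, P i), ∃ (g : Fin k → ℕ) (c : Fin k → G), ∑ i, g i = n ∧
      (∀ i, c i ∈ Γ i) ∧ (∀ i, g i = 0 → c i = 0) ∧ x = ∑ i, (g i • a i + c i) := by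
  induction n with
  | zero =>
    intro x hx
    refine ⟨0, 0, by simp, fun i => (Γ i).zero_mem, by simp, ?_⟩
    simpa [hfold] using hx
  | succ n ih =>
    intro x hx
    rw [hfold, Set.mem_add] at hx
    obtain ⟨y, hy, z, hz, rfl⟩ := hx
    obtain ⟨g, c, hg, hc, h0, rfl⟩ := ih z hz
    obtain ⟨i, hi⟩ := Set.mem_iUnion.1 hy
    obtain ⟨e, he, rfl⟩ := (hP i y).1 hi
    refine ⟨g + Pi.single i 1, c + Pi.single i e, ?_, ?_, ?_, ?_⟩
    · simp [Finset.sum_add_distrib, hg]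
    · intro j
      by_cases hj : j = i
      · subst hj; simpa using (Γ j).add_mem (hc j) he
      · simpa [hj] using hc j
    · intro j
      by_cases hj : j = i
      · subst hj; simp
      · simpa [hj] using h0 j
    · have h1 : ∑ j, (Pi.single i 1 : Fin k → ℕ) j • a j = a i := by
        rw [Finset.sum_eq_single i] <;> simp +contextual [Pi.single_apply]
      simp only [Pi.add_apply, add_smul, Finset.sum_add_distrib, h1]
      simp
      abel

lemma hfold_backward {G : Type*} [AddCommGroup G] {k : ℕ} (P : Fin k → Set G) (a : Fin k → G)
    (Γ : Fin k → AddSubmonoid G) (hP : ∀ i x, x ∈ P i ↔ ∃ c ∈ Γ i, x = a i + c) (n : ℕ) :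
    ∀ (g : Fin k → ℕ) (c : Fin k → G), ∑ i, g i = n →
      (∀ i, c i ∈ Γ i) → (∀ i, g i = 0 → c i = 0) →
      ∑ i, (g i • a i + c i) ∈ hfold n (⋃ i, P i) := by
  induction n with
  | zero =>
    intro g c hg hc h0
    have hg0 : ∀ i, g i = 0 := by simpa using hg
    have : ∀ i, g i • a i + c i = 0 := fun i => by simp [hg0 i, h0 i (hg0 i)]
    simp [hfold, this]
  | succ n ih =>
    intro g c hg hc h0
    obtain ⟨i, hi⟩ : ∃ i, g i ≠ 0 := by
      by_contra! hcon
      simp [hcon] at hg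
    obtain ⟨p, hp⟩ := Nat.exists_eq_succ_of_ne_zero hi
    have key := ih (Function.update g i p) (Function.update c i 0) ?_ ?_ ?_
    · rw [hfold, Set.mem_add]
      refine ⟨a i + c i, Set.mem_iUnion.2 ⟨i, (hP i _).2 ⟨c i, hc i, rfl⟩⟩, _, key, ?_⟩
      rw [← Finset.add_sum_erase _ _ (Finset.mem_univ i),
        ← Finset.add_sum_erase Finset.univ (fun j => g j • a j + c j) (Finset.mem_univ i)]
      have : ∑ j ∈ Finset.univ.erase i, (Function.update g i p j • a j + Function.update c i 0 j)
          = ∑ j ∈ Finset.univ.erase i, (g j • a j + c j) := by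
        apply Finset.sum_congr rfl
        intro j hj
        simp [Finset.ne_of_mem_erase hj]
      rw [this]
      simp [hp, succ_nsmul]
      abel
    · rw [← Finset.add_sum_erase _ _ (Finset.mem_univ i)] at hg ⊢
      have : ∑ j ∈ Finset.univ.erase i, Function.update g i p j
          = ∑ j ∈ Finset.univ.erase i, g j := by
        apply Finset.sum_congr rfl
        intro j hj
        simp [Finset.ne_of_mem_erase hj]
      rw [this]
      simp only [Function.update_self]
      omega
    · intro j
      by_cases hj : j = i
      · subst hj; simpa using (Γ j).zero_mem
      · simpa [hj] using hc j
    · intro j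
      by_cases hj : j = i
      · subst hj; simp
      · simpa [hj] using h0 j

/-- The purely combinatorial covering statement. -/
def Covers (k r h N : ℕ) : Prop :=
  ∃ D : Finset (Fin k → ℤ), D.card ≤ N ∧ ∀ g : Fin k → ℕ, ∑ i, g i = r * h →
    ∃ d ∈ D, ∑ i, d i = (r : ℤ) * h - h ∧ ∀ i, d i ≤ 0 ∨ d i < g i

lemma cover_of_covers {G : Type*} [AddCommGroup G] {k : ℕ} (P : Fin k → Set G)
    (hP : ∀ i, IsUnboundedLinear (P i)) (r h N : ℕ) (hc : Covers k r h N) :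
    ∃ X : Finset G, X.card ≤ N ∧
      hfold r (hfold h (⋃ i, P i)) ⊆ ↑X + hfold h (⋃ i, P i) := by
  classical
  choose dim a b hab using hP
  have hP' : ∀ i x, x ∈ P i ↔ ∃ c ∈ AddSubmonoid.closure (Set.range (b i)), x = a i + c := by
    intro i x
    rw [hab i]
    simp only [AddSubmonoid.mem_closure_range_iff_of_fintype, Set.mem_setOf_eq]
    constructor
    · rintro ⟨n, rfl⟩; exact ⟨_, ⟨n, rfl⟩, rfl⟩
    · rintro ⟨_, ⟨n, rfl⟩, rfl⟩; exact ⟨n, rfl⟩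
  obtain ⟨D, hD, hcov⟩ := hc
  refine ⟨D.image (fun d => ∑ i, d i • a i), Finset.card_image_le.trans hD, ?_⟩
  intro x hx
  rw [hfold_hfold] at hx
  obtain ⟨g, c, hg, hcΓ, h0, rfl⟩ := hfold_forward P a _ hP' _ x hx
  obtain ⟨d, hd, hds, hdi⟩ := hcov g hg
  rw [Set.mem_add]
  have hnn : ∀ i, ((g i - d i).toNat : ℤ) = g i - d i := fun i => by
    rcases hdi i with h1 | h1 <;> omega
  refine ⟨∑ i, d i • a i, by simpa using ⟨d, hd, rfl⟩, _,
    hfold_backward P a _ hP' h (fun i => (g i - d i).toNat) c ?_ hcΓ ?_, ?_⟩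
  · zify
    simp only [hnn, Finset.sum_sub_distrib, hds]
    have : (∑ i, (g i : ℤ)) = r * h := by exact_mod_cast hg
    rw [this]; ring
  · intro i hi
    apply h0
    rcases hdi i with h1 | h1 <;> omega
  · rw [← Finset.sum_add_distrib]
    apply Finset.sum_congr rfl
    intro i _
    rw [← natCast_zsmul (a i) (g i - d i).toNat, hnn, sub_smul, natCast_zsmul]
    abel

lemma covers_one (r h : ℕ) (hh : 0 < h) : Covers 1 r h 1 := by
  refine ⟨{fun _ => (r : ℤ) * h - h}, by simp, ?_⟩
  intro g hg
  refine ⟨_, Finset.mem_singleton_self _, by simp, ?_⟩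
  intro i
  right
  have : g i = r * h := by
    rw [← hg]; simp [Subsingleton.elim i 0]
  rw [this]; push_cast; omega

lemma covers_two (r h : ℕ) (hr : 0 < r) (hh : r + 2 ≤ h) : Covers 2 r h (r + 1) := by
  classical
  refine ⟨(Finset.range (r + 1)).image (fun j : ℕ =>
    ![min ((j : ℤ) * (h - 1)) ((r : ℤ) * h - h),
      (r : ℤ) * h - h - min ((j : ℤ) * (h - 1)) ((r : ℤ) * h - h)]),
    Finset.card_image_le.trans (by simp), ?_⟩
  intro g hg
  rw [Fin.sum_univ_two] at hg
  have hgz : (g 0 : ℤ) + g 1 = r * h := by exact_mod_cast hg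
  obtain ⟨t, rfl⟩ : ∃ t, h = t + 1 := ⟨h - 1, by omega⟩
  have ht : 0 < t := by omega
  have hrt : (r : ℤ) + 1 ≤ t := by push_cast at *; omega
  have hr1 : (1 : ℤ) ≤ r := by exact_mod_cast hr
  set j := min r ((g 0 - 1) / t) with hj
  refine ⟨_, Finset.mem_image_of_mem _ (Finset.mem_range.2 (by omega : j < r + 1)), by simp, ?_⟩
  have hdm := Nat.div_add_mod (g 0 - 1) t
  have hml := Nat.mod_lt (g 0 - 1) ht
  have hj2 : j ≤ (g 0 - 1) / t := min_le_right _ _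
  have hj0 : j * t ≤ g 0 - 1 := (Nat.le_div_iff_mul_le ht).1 hj2
  have hj0z : (j : ℤ) * t ≤ 0 ∨ (j : ℤ) * t < g 0 := by
    zify at hj0
    omega
  intro i
  fin_cases i
  · simp only [Fin.zero_eta, Matrix.cons_val_zero]
    push_cast
    rw [add_sub_cancel_right]
    rcases hj0z with h1 | h1
    · left; exact (min_le_left _ _).trans h1
    · right; exact (min_le_left _ _).trans_lt h1
  · simp only [Fin.mk_one, Matrix.cons_val_one, Matrix.cons_val_zero]
    push_cast at *
    rw [add_sub_cancel_right]
    rcases le_total ((r : ℤ) * (t + 1) - (t + 1)) (j * t) with h1 | h1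
    · left; rw [min_eq_right h1]; simp
    · right; rw [min_eq_left h1]
      have hjr : j ≠ r := by
        intro e; rw [e] at h1; nlinarith
      have hj' : j = (g 0 - 1) / t := by omega
      rw [← hj'] at hdm
      have : g 0 < t + 1 + j * t := by
        have := mul_comm t j
        omega
      zify at this
      linarith

lemma exists_sub_sum {k : ℕ} (M : ℕ) (m : Fin k → ℕ) (hm : M ≤ ∑ i, m i) :
    ∃ m' : Fin k → ℕ, (∀ i, m' i ≤ m i) ∧ ∑ i, m' i = M := by
  induction M with
  | zero => exact ⟨0, by simp, by simp⟩
  | succ M ih =>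
    obtain ⟨m', h1, h2⟩ := ih (by omega)
    obtain ⟨i, -, hi⟩ := Finset.exists_lt_of_sum_lt (s := Finset.univ) (f := m') (g := m) (by omega)
    refine ⟨m' + Pi.single i 1, ?_, by simp [Finset.sum_add_distrib, h2]⟩
    intro j
    by_cases hj : j = i
    · subst hj; simpa using hi
    · simpa [hj] using h1 j

lemma covers_general (q r h : ℕ) (hq : 0 < q) (hr : 0 < r) (hh : r * (q + 1) ≤ h) :
    Covers (q + 1) r h (((r + 1) * q).choose q) := by
  classical
  set M := r * q with hM
  have hM0 : 0 < M := Nat.mul_pos hr hq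
  obtain ⟨s, rfl⟩ : ∃ s, r = s + 1 := ⟨r - 1, by omega⟩
  let f : ℕ → ℕ := fun m => (m * (s * h)) ⌈/⌉ M
  have hf : ∀ m c, f m ≤ c ↔ m * (s * h) ≤ M * c := fun m c => ceilDiv_le_iff_le_mul hM0
  let dv : (Fin (q + 1) → ℕ) → (Fin (q + 1) → ℤ) := fun m =>
    (fun i => (f (m i) : ℤ)) - Pi.single 0 (∑ i, (f (m i) : ℤ) - s * h)
  refine ⟨Finset.univ.image (fun S : Sym (Fin (q + 1)) M =>
    dv (Sym.equivNatSumOfFintype (Fin (q + 1)) M S).1), ?_, ?_⟩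
  · refine Finset.card_image_le.trans ?_
    rw [Finset.card_univ, Sym.card_sym_eq_choose, Fintype.card_fin]
    have e : (s + 1 + 1) * q = M + q := by rw [hM]; ring
    have e2 : q + 1 + M - 1 = M + q := by omega
    rw [e, e2, Nat.choose_symm_add]
  intro g hg
  let p : Fin (q + 1) → ℕ → Prop := fun i m => m = 0 ∨ m * (s * h) + M ≤ M * g i
  let m : Fin (q + 1) → ℕ := fun i => Nat.findGreatest (p i) M
  have hpm : ∀ i, p i (m i) := fun i =>
    Nat.findGreatest_spec (P := p i) (Nat.zero_le M) (Or.inl rfl)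
  have hsum : M ≤ ∑ i, m i := by
    by_contra! hlt
    have hlt' : ∀ i, m i < M := fun i =>
      (Finset.single_le_sum (fun _ _ => Nat.zero_le _) (Finset.mem_univ i)).trans_lt hlt
    have hneg : ∀ i, M * g i + 1 ≤ (m i + 1) * (s * h) + M := by
      intro i
      have := Nat.findGreatest_is_greatest (P := p i) (n := M) (k := m i + 1)
        (Nat.lt_succ_self _) (hlt' i)
      simp only [p, not_or, not_le] at this
      omega
    have hs := Finset.sum_le_sum (s := Finset.univ) (fun i _ => hneg i)
    simp only [Finset.sum_add_distrib, ← Finset.mul_sum, ← Finset.sum_mul, hg] at hs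
    simp only [Finset.sum_const, Finset.card_univ, Fintype.card_fin, smul_eq_mul, mul_one] at hs
    have h2 : (∑ i, m i + (q + 1)) * (s * h) ≤ (M + q) * (s * h) :=
      Nat.mul_le_mul_right _ (by omega)
    have h3 : q * ((s + 1) * (q + 1)) ≤ q * h := Nat.mul_le_mul_left _ hh
    have e1 : (M + q) * (s * h) + q * h = M * ((s + 1) * h) := by rw [hM]; ring
    have e2 : q * ((s + 1) * (q + 1)) = (q + 1) * M := by rw [hM]; ring
    omega
  obtain ⟨m', hm', hsm'⟩ := exists_sub_sum M m hsum
  have hfm : ∀ i, f (m' i) = 0 ∨ f (m' i) < g i := by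
    intro i
    rcases hpm i with h0 | h0
    · left
      have : m' i = 0 := by have := hm' i; omega
      have := (hf (m' i) 0).2 (by simp [this])
      omega
    · right
      have h1 : m' i * (s * h) ≤ m i * (s * h) := Nat.mul_le_mul_right _ (hm' i)
      have hg0 : 0 < g i := by
        rcases Nat.eq_zero_or_pos (g i) with h | h
        · rw [h] at h0; omega
        · exact h
      obtain ⟨e, he⟩ : ∃ e, g i = e + 1 := ⟨g i - 1, by omega⟩
      have := (hf (m' i) e).2 (by rw [he] at h0; rw [mul_add] at h0; omega)
      omega
  have hex : s * h ≤ ∑ i, f (m' i) := by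
    have : M * (s * h) ≤ M * ∑ i, f (m' i) := by
      rw [Finset.mul_sum]
      calc M * (s * h) = ∑ i, m' i * (s * h) := by rw [← Finset.sum_mul, hsm']
        _ ≤ _ := Finset.sum_le_sum fun i _ => (hf _ _).1 le_rfl
    exact Nat.le_of_mul_le_mul_left this hM0
  zify at hex
  refine ⟨dv m', ?_, ?_, ?_⟩
  · rw [Finset.mem_image]
    exact ⟨(Sym.equivNatSumOfFintype (Fin (q + 1)) M).symm ⟨m', hsm'⟩, Finset.mem_univ _, by simp only [Equiv.apply_symm_apply]⟩
  · simp only [dv, Pi.sub_apply, Finset.sum_sub_distrib, Finset.sum_pi_single', Finset.mem_univ, if_true]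
    push_cast
    simp
    ring
  · intro i
    have : dv m' i ≤ f (m' i) := by
      simp only [dv, Pi.sub_apply]
      by_cases hi : i = 0
      · subst hi; simp only [Pi.single_eq_same]; linarith
      · simp [hi]
    rcases hfm i with h0 | h0 <;> omega

/-- One-color theorem for unions of unbounded linear sets: if `A` is a union of `k`
unbounded linear sets, then `A` is an asymptotic `(r, C((r+1)(k−1), k−1))`-approximate
group; moreover the covering holds for every `h ≥ r(k−1)² + k`. -/
theorem stmt12 {G : Type*} [AddCommGroup G] (A : Set G) (k : ℕ) (hk : 0 < k)
    (P : Fin k → Set G) (hP : ∀ i, IsUnboundedLinear (P i)) (hA : A = ⋃ i, P i)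
    (r : ℕ) (hr : 0 < r) :
    IsAAG A r (((r + 1) * (k - 1)).choose (k - 1)) ∧
    ∀ h : ℕ, r * (k - 1) ^ 2 + k ≤ h →
      ∃ X : Finset G, X.card ≤ ((r + 1) * (k - 1)).choose (k - 1) ∧
        hfold r (hfold h A) ⊆ ↑X + hfold h A := by
  have main : ∀ h : ℕ, r * (k - 1) ^ 2 + k ≤ h →
      ∃ X : Finset G, X.card ≤ ((r + 1) * (k - 1)).choose (k - 1) ∧
        hfold r (hfold h A) ⊆ ↑X + hfold h A := by
    intro h hh
    subst hA
    apply cover_of_covers P hP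
    obtain ⟨q, rfl⟩ : ∃ q, k = q + 1 := ⟨k - 1, by omega⟩
    rw [Nat.add_sub_cancel] at hh ⊢
    rcases q with _ | _ | q
    · simpa using covers_one r h (by omega)
    · simpa using covers_two r h hr (by simpa using hh)
    · refine covers_general (q + 2) r h (by omega) hr (le_trans ?_ hh)
      have : r * (q + 2 + 1) ≤ r * (q + 2) ^ 2 := Nat.mul_le_mul_left _ (by nlinarith)
      exact this.trans (Nat.le_add_right _ _)
  exact ⟨⟨_, main⟩, main⟩
end

section
/- (Chromatic theorem for unions of unbounded linear sets.) Let 𝒜 = (A₁,…,A_q) be a tuple of subsets of an abelian group G such that for each i, the set A_i is a union of k_i unbounded linear sets. Then for every r ∈ ℕ, the tuple 𝒜 is a chromatic asymptotic (r,ℓ)-approximate group with ℓ = ∏_{i=1}^q C((r+1)(k_i−1), k_i−1). -/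
open Pointwise BigOperators

lemma aux_fwd {G : Type*} [AddCommGroup G] {n : ℕ} (a : Fin n → G) (M : Fin n → AddSubmonoid G)
    (h : ℕ) : ∀ x ∈ hfold h (⋃ j, {x | ∃ b ∈ M j, x = a j + b}),
    ∃ (u : Fin n → ℕ) (w : Fin n → G), ∑ j, u j = h ∧ (∀ j, w j ∈ M j) ∧
      (∀ j, u j = 0 → w j = 0) ∧ x = ∑ j, u j • a j + ∑ j, w j := by
  induction h with
  | zero =>
    intro x hx
    refine ⟨0, 0, by simp, fun j => (M j).zero_mem, by simp, ?_⟩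
    simpa [hfold] using hx
  | succ h ih =>
    intro x hx
    obtain ⟨p, hp, y, hy, rfl⟩ := Set.mem_add.1 hx
    obtain ⟨u, w, hu, hw, hz, rfl⟩ := ih y hy
    obtain ⟨j, b, hb, rfl⟩ := Set.mem_iUnion.1 hp
    refine ⟨u + Pi.single j 1, w + Pi.single j b, ?_, ?_, ?_, ?_⟩
    · simp [Finset.sum_add_distrib, hu]
    · intro i
      refine (M i).add_mem (hw i) ?_
      by_cases hij : i = j
      · subst hij; simpa using hb
      · simp [hij]
    · intro i hi
      by_cases hij : i = j
      · subst hij; simp at hi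
      · simp [hij] at hi ⊢; exact hz i hi
    · have : ∑ i, (Pi.single j 1 : Fin n → ℕ) i • a i = a j := by
        rw [Finset.sum_eq_single j] <;> simp +contextual
      simp [Finset.sum_add_distrib, add_smul, this]
      abel

lemma aux_bwd {G : Type*} [AddCommGroup G] {n : ℕ} (a : Fin n → G) (M : Fin n → AddSubmonoid G)
    (h : ℕ) : ∀ (u : Fin n → ℕ) (w : Fin n → G), ∑ j, u j = h → (∀ j, w j ∈ M j) →
      (∀ j, u j = 0 → w j = 0) →
      ∑ j, u j • a j + ∑ j, w j ∈ hfold h (⋃ j, {x | ∃ b ∈ M j, x = a j + b}) := by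
  induction h with
  | zero =>
    intro u w hu hw hz
    have h0 : ∀ j, u j = 0 := by simpa using hu
    simp [hfold, h0, fun j => hz j (h0 j)]
  | succ h ih =>
    intro u w hu hw hz
    obtain ⟨j, hj⟩ : ∃ j, u j ≠ 0 := by
      by_contra! hc
      simp [hc] at hu
    have hu' : u = (Function.update u j (u j - 1)) + Pi.single j 1 := by
      ext i
      by_cases hij : i = j
      · subst hij; simp; omega
      · simp [hij]
    have hw' : w = (Function.update w j 0) + Pi.single j (w j) := by
      ext i
      by_cases hij : i = j
      · subst hij; simp
      · simp [hij]
    have key := ih (Function.update u j (u j - 1)) (Function.update w j 0) ?_ ?_ ?_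
    · refine Set.mem_add.2 ⟨a j + w j, Set.mem_iUnion.2 ⟨j, w j, hw j, rfl⟩, _, key, ?_⟩
      have h1 : ∑ i, (Pi.single j 1 : Fin n → ℕ) i • a i = a j := by
        rw [Finset.sum_eq_single j] <;> simp +contextual
      have h2 : ∑ i, u i • a i = ∑ i, (Function.update u j (u j - 1)) i • a i + a j := by
        conv_lhs => rw [hu']
        simp only [Pi.add_apply, add_smul, Finset.sum_add_distrib, h1]
      have h3 : ∑ i, w i = ∑ i, (Function.update w j 0) i + w j := by
        conv_lhs => rw [hw']
        simp only [Pi.add_apply, Finset.sum_add_distrib]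
        simp
      rw [h2, h3]; abel
    · rw [hu'] at hu
      simp only [Pi.add_apply, Finset.sum_add_distrib] at hu
      simpa using hu
    · intro i
      by_cases hij : i = j
      · subst hij; simp
      · simpa [hij] using hw i
    · intro i hi
      by_cases hij : i = j
      · subst hij; simp
      · simp [hij] at hi ⊢; exact hz i hi

lemma aux_m (n r h : ℕ) (hh : n * (r * n + 1) + 1 ≤ h) :
    ∃ m, n * m < h ∧ r * h < (r * n + 1) * m := by
  rcases Nat.eq_zero_or_pos n with rfl | hn
  · exact ⟨r * h + 1, by omega, by simp⟩
  · refine ⟨(h - 1) / n, ?_, ?_⟩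
    · have := Nat.mul_div_le (h - 1) n
      omega
    · have h1 : r * n + 1 ≤ (h - 1) / n := by
        rw [Nat.le_div_iff_mul_le hn, mul_comm]; omega
      have h2 : h ≤ n * ((h - 1) / n) + n := by
        have := Nat.div_add_mod (h - 1) n
        have := Nat.mod_lt (h - 1) hn
        omega
      calc r * h ≤ r * (n * ((h - 1) / n) + n) := Nat.mul_le_mul_left _ h2
        _ < (r * n + 1) * ((h - 1) / n) := by nlinarith

lemma aux_split (m x : ℕ) (hm : 0 < m) :
    ∃ c s, x = m * c + s ∧ s ≤ m ∧ (s = 0 → x = 0) := by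
  rcases Nat.eq_zero_or_pos x with rfl | hx
  · exact ⟨0, 0, by simp⟩
  · refine ⟨(x - 1) / m, (x - 1) % m + 1, ?_, ?_, by omega⟩
    · have := Nat.div_add_mod (x - 1) m
      omega
    · exact Nat.mod_lt _ hm

lemma aux_card (n N : ℕ) : (Finset.piAntidiag (Finset.univ : Finset (Fin (n + 1))) N).card
    = (N + n).choose n := by
  induction n generalizing N with
  | zero =>
    rw [Finset.piAntidiag_univ_fin_eq_antidiagonalTuple]
    simp
  | succ n ih =>
    rw [Finset.piAntidiag_univ_fin_eq_antidiagonalTuple]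
    have h1 : (Finset.Nat.antidiagonalTuple (n + 2) N).card
        = ∑ p ∈ Finset.HasAntidiagonal.antidiagonal N, (Finset.Nat.antidiagonalTuple (n + 1) p.2).card := by
      simp only [Finset.card_def, Finset.Nat.antidiagonalTuple, Multiset.Nat.antidiagonalTuple,
        List.Nat.antidiagonalTuple, Multiset.coe_card, List.length_flatMap, List.length_map]
      rfl
    simp only [Finset.piAntidiag_univ_fin_eq_antidiagonalTuple] at ih
    rw [h1, Finset.sum_congr rfl (fun p _ => ih p.2),
      ← Finset.Nat.sum_antidiagonal_swap (n := N)]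
    simp only [Prod.snd_swap]
    rw [Finset.Nat.sum_antidiagonal_eq_sum_range_succ (fun i _ => (i + n).choose n),
      Nat.sum_range_add_choose, add_assoc]

lemma aux_single {G : Type*} [AddCommGroup G] {n : ℕ} (a : Fin (n + 1) → G)
    (M : Fin (n + 1) → AddSubmonoid G) (r h : ℕ) (hh : n * (r * n + 1) + 1 ≤ h) :
    ∃ X : Finset G, X.card ≤ ((r + 1) * n).choose n ∧
      hfold (r * h) (⋃ j, {x | ∃ b ∈ M j, x = a j + b}) ⊆
        ↑X + hfold h (⋃ j, {x | ∃ b ∈ M j, x = a j + b}) := by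
  classical
  obtain ⟨m, hm1, hm2⟩ := aux_m n r h hh
  have hm : 0 < m := by
    rcases Nat.eq_zero_or_pos m with rfl | h0
    · simp at hm2
    · exact h0
  let f : (Fin (n + 1) → ℕ) → G := fun c =>
    ((r : ℤ) * h - h - m * ∑ j : Fin n, (c j.succ : ℤ)) • a 0
      + ∑ j : Fin n, ((m : ℤ) * c j.succ) • a j.succ
  refine ⟨(Finset.piAntidiag Finset.univ (r * n)).image f, ?_, ?_⟩
  · refine Finset.card_image_le.trans ?_
    rw [aux_card]
    apply le_of_eq; congr 1; ring
  · intro x hx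
    obtain ⟨u, w, hu, hw, hz, rfl⟩ := aux_fwd a M _ x hx
    choose c s hcs hsm hs0 using fun j : Fin n => aux_split m (u j.succ) hm
    rw [Fin.sum_univ_succ] at hu
    have hS : ∑ j, s j < h := by
      refine lt_of_le_of_lt (Finset.sum_le_sum fun j _ => hsm j) ?_
      simpa using hm1
    have hsum : ∑ j : Fin n, u j.succ = m * ∑ j, c j + ∑ j, s j := by
      rw [Finset.mul_sum, ← Finset.sum_add_distrib]
      exact Finset.sum_congr rfl fun j _ => hcs j
    have hC : ∑ j, c j ≤ r * n := by
      have : m * ∑ j, c j < m * (r * n + 1) := by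
        rw [mul_comm m (r * n + 1)]; omega
      have := Nat.lt_of_mul_lt_mul_left this
      omega
    have key := aux_bwd a M h (Fin.cons (h - ∑ j, s j) s) w ?_ hw ?_
    · refine Set.mem_add.2 ⟨f (Fin.cons (r * n - ∑ j, c j) c), ?_, _, key, ?_⟩
      · apply Finset.mem_coe.2
        apply Finset.mem_image_of_mem
        rw [Finset.mem_piAntidiag]
        refine ⟨?_, by simp⟩
        rw [Fin.sum_univ_succ]
        simp only [Fin.cons_zero, Fin.cons_succ]
        omega
      · rw [← add_assoc]
        congr 1
        simp only [f, Fin.sum_univ_succ, Fin.cons_zero, Fin.cons_succ]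
        have e1 : ∑ j : Fin n, u j.succ • a j.succ
            = ∑ j : Fin n, ((m : ℤ) * c j) • a j.succ + ∑ j, s j • a j.succ := by
          rw [← Finset.sum_add_distrib]
          refine Finset.sum_congr rfl fun j _ => ?_
          rw [hcs j, add_smul, ← natCast_zsmul, Nat.cast_mul]
        have e0 : u 0 • a 0 = ((r : ℤ) * h - h - m * ∑ j : Fin n, (c j : ℤ)) • a 0
            + (h - ∑ j, s j) • a 0 := by
          rw [← natCast_zsmul, ← natCast_zsmul (a 0) (h - ∑ j, s j), ← add_smul]
          congr 1
          rw [hsum] at hu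
          rw [Nat.cast_sub hS.le]
          have := congrArg (Nat.cast : ℕ → ℤ) hu
          push_cast at this ⊢
          linarith
        rw [e0, e1]; abel
    · rw [Fin.sum_univ_succ]
      simp only [Fin.cons_zero, Fin.cons_succ]
      omega
    · intro j
      refine Fin.cases ?_ (fun j => ?_) j
      · simp only [Fin.cons_zero]; omega
      · simp only [Fin.cons_succ]
        exact fun h0 => hz _ (hs0 j h0)

lemma aux_one {G : Type*} [AddCommGroup G] (A : Set G) (k r : ℕ) (hr : 0 < r)
    (hd : ∃ P : Fin k → Set G, (∀ j, IsUnboundedLinear (P j)) ∧ A = ⋃ j, P j) :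
    ∃ h₀, ∀ h, h₀ ≤ h → ∃ X : Finset G, X.card ≤ ((r + 1) * (k - 1)).choose (k - 1) ∧
      hfold (r * h) A ⊆ ↑X + hfold h A := by
  obtain ⟨P, hP, rfl⟩ := hd
  cases k with
  | zero =>
    refine ⟨1, fun h hh => ⟨∅, by simp, ?_⟩⟩
    obtain ⟨t, ht⟩ : ∃ t, r * h = t + 1 := ⟨r * h - 1, by
      have := Nat.mul_pos hr hh
      omega⟩
    rw [ht]
    simp [hfold]
  | succ n =>
    choose d a b hb using hP
    have e : ∀ j, P j = {x | ∃ y ∈ AddSubmonoid.closure (Set.range (b j)), x = a j + y} := by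
      intro j
      conv_lhs => rw [hb j]
      ext x
      simp only [Set.mem_ofPred_eq, AddSubmonoid.mem_closure_range_iff_of_fintype]
      constructor
      · rintro ⟨t, rfl⟩; exact ⟨_, ⟨t, rfl⟩, rfl⟩
      · rintro ⟨_, ⟨t, rfl⟩, rfl⟩; exact ⟨t, rfl⟩
    have e' : P = fun j => {x | ∃ y ∈ AddSubmonoid.closure (Set.range (b j)), x = a j + y} :=
      funext e
    refine ⟨n * (r * n + 1) + 1, fun h hh => ?_⟩
    rw [e']
    exact aux_single a (fun j => AddSubmonoid.closure (Set.range (b j))) r h hh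

/-- Chromatic theorem for unions of unbounded linear sets: if each `Aᵢ` is a union of
`kᵢ` unbounded linear sets, then `𝒜` is a chromatic asymptotic
`(r, ∏ᵢ C((r+1)(kᵢ−1), kᵢ−1))`-approximate group. -/
theorem stmt13 {G : Type*} [AddCommGroup G] {q : ℕ} (A : Fin q → Set G) (k : Fin q → ℕ)
    (hdecomp : ∀ i, ∃ P : Fin (k i) → Set G,
      (∀ j, IsUnboundedLinear (P j)) ∧ A i = ⋃ j, P j)
    (r : ℕ) (hr : 0 < r) :
    IsCAAG A r (∏ i, ((r + 1) * (k i - 1)).choose (k i - 1)) := by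
  classical
  choose h₀ H using fun i => aux_one (A i) (k i) r hr (hdecomp i)
  refine ⟨h₀, fun h hh => ?_⟩
  choose X hX hsub using fun i => H i (h i) (hh i)
  have gen : ∀ s : Finset (Fin q), (∑ i ∈ s, X i).card ≤ ∏ i ∈ s, (X i).card ∧
      ∑ i ∈ s, hfold (r * h i) (A i) ⊆
        ((∑ i ∈ s, X i : Finset G) : Set G) + ∑ i ∈ s, hfold (h i) (A i) := by
    intro s
    induction s using Finset.induction_on with
    | empty => simp
    | insert i s hi ih =>
      rw [Finset.sum_insert hi, Finset.sum_insert hi, Finset.sum_insert hi, Finset.prod_insert hi]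
      refine ⟨Finset.card_add_le.trans (Nat.mul_le_mul_left _ ih.1), ?_⟩
      rw [Finset.coe_add, add_add_add_comm]
      exact Set.add_subset_add (hsub i) ih.2
  exact ⟨∑ i, X i, (gen Finset.univ).1.trans (Finset.prod_le_prod' fun i _ => hX i),
    (gen Finset.univ).2⟩
end

section
/- (Inhomogeneous extension.) Let 𝒜 = (A₁,…,A_q) be a chromatic asymptotic (r,ℓ)-approximate group in an abelian group G, and let B ⊆ G be a nonempty finite set of size m. Then the family S_h := h·𝒜 + B is an asymptotic (r, ℓ·C((r+1)(m−1), m−1))-approximate family: there exists h₀ ∈ ℕ₀^q such that for every h ⪰ h₀ there is a set Y_h ⊆ G with |Y_h| ≤ ℓ·C((r+1)(m−1), m−1) and r(h·𝒜 + B) ⊆ Y_h + h·𝒜 + B. -/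
open Pointwise BigOperators

theorem hfold_zero_aux {G : Type*} [AddCommMonoid G] (A : Set G) : hfold 0 A = 0 := rfl

theorem hfold_succ_aux {G : Type*} [AddCommMonoid G] (n : ℕ) (A : Set G) :
    hfold (n + 1) A = A + hfold n A := rfl

theorem hfold_add_set {G : Type*} [AddCommMonoid G] (n : ℕ) (S T : Set G) :
    hfold n (S + T) = hfold n S + hfold n T := by
  induction n with
  | zero => simp [hfold_zero_aux]
  | succ n ih => rw [hfold_succ_aux, ih, hfold_succ_aux, hfold_succ_aux, add_add_add_comm]

theorem hfold_zero_set {G : Type*} [AddCommMonoid G] (n : ℕ) :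
    hfold n (0 : Set G) = 0 := by
  induction n with
  | zero => rfl
  | succ n ih => rw [hfold_succ_aux, ih, add_zero]

theorem hfold_add_nat {G : Type*} [AddCommMonoid G] (m n : ℕ) (S : Set G) :
    hfold (m + n) S = hfold m S + hfold n S := by
  induction m with
  | zero => simp [hfold_zero_aux]
  | succ m ih => rw [Nat.succ_add, hfold_succ_aux, ih, hfold_succ_aux, add_assoc]

theorem hfold_mul_nat {G : Type*} [AddCommMonoid G] (m n : ℕ) (S : Set G) :
    hfold m (hfold n S) = hfold (m * n) S := by
  induction m with
  | zero => simp [hfold_zero_aux]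
  | succ m ih => rw [hfold_succ_aux, ih, Nat.succ_mul, Nat.add_comm, hfold_add_nat]

theorem hfold_sum_set {G : Type*} [AddCommMonoid G] {ι : Type*} (n : ℕ) (s : Finset ι)
    (f : ι → Set G) : hfold n (∑ i ∈ s, f i) = ∑ i ∈ s, hfold n (f i) := by
  classical
  induction s using Finset.induction_on with
  | empty => simp [hfold_zero_set]
  | insert a s ha ih => rw [Finset.sum_insert ha, Finset.sum_insert ha, hfold_add_set, ih]

theorem hfold_chromSum {G : Type*} [AddCommMonoid G] {q : ℕ} (r : ℕ) (h : Fin q → ℕ)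
    (A : Fin q → Set G) : hfold r (chromSum h A) = chromSum (fun i => r * h i) A := by
  simp only [chromSum, hfold_sum_set, hfold_mul_nat]

theorem hfold_subset_sym {G : Type*} [AddCommMonoid G] (B : Finset G) (n : ℕ) :
    hfold n (B : Set G) ⊆
      Set.range (fun s : Sym B n => (s.1.map (fun b : B => (b : G))).sum) := by
  induction n with
  | zero =>
    intro x hx
    have hx0 : x = 0 := hx
    exact ⟨Sym.nil, by simp [hx0]⟩
  | succ n ih =>
    rintro x hx
    rw [hfold_succ_aux] at hx
    obtain ⟨b, hb, y, hy, rfl⟩ := Set.mem_add.1 hx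
    obtain ⟨s, rfl⟩ := ih hy
    exact ⟨Sym.cons ⟨b, hb⟩ s, by simp [Sym.coe_cons]⟩

theorem hfold_cover_s15 {G : Type*} [AddCommMonoid G] (B : Finset G) (n : ℕ) :
    ∃ Z : Finset G, Z.card ≤ Nat.multichoose B.card n ∧ hfold n (B : Set G) ⊆ Z := by
  classical
  refine ⟨Finset.univ.image
    (fun s : Sym B n => (s.1.map (fun b : B => (b : G))).sum), ?_, ?_⟩
  · refine Finset.card_image_le.trans ?_
    rw [Finset.card_univ, Sym.card_sym_eq_multichoose, Fintype.card_coe]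
  · simpa using hfold_subset_sym B n

theorem multichoose_bound (k n : ℕ) :
    Nat.multichoose (k + 1) n ≤ ((n + 1 + 1) * k).choose k := by
  rw [Nat.multichoose_eq]
  have e : k + 1 + n - 1 = k + n := by omega
  rw [e, ← Nat.choose_symm_add]
  rcases k with _ | k
  · simp
  · exact Nat.choose_le_choose _ (by nlinarith)

/-- Inhomogeneous extension: if `𝒜` is a chromatic asymptotic `(r,ℓ)`-approximate group
and `B` is a nonempty finite set of size `m`, then the family `S_h = h·𝒜 + B` is an
asymptotic `(r, ℓ·C((r+1)(m−1), m−1))`-approximate family. -/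
theorem stmt15 {G : Type*} [AddCommGroup G] {q : ℕ} (A : Fin q → Set G)
    (hA : ∀ i, (A i).Nonempty) (r ℓ : ℕ) (hr : 0 < r) (hℓ : 0 < ℓ)
    (hCAAG : IsCAAG A r ℓ) (B : Finset G) (hB : B.Nonempty) (m : ℕ) (hm : B.card = m) :
    ∃ h₀ : Fin q → ℕ, ∀ h : Fin q → ℕ, (∀ i, h₀ i ≤ h i) →
      ∃ Y : Finset G, Y.card ≤ ℓ * ((r + 1) * (m - 1)).choose (m - 1) ∧
        hfold r (chromSum h A + (B : Set G)) ⊆ (Y : Set G) + chromSum h A + (B : Set G) := by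
  classical
  obtain ⟨h₀, H⟩ := hCAAG
  refine ⟨h₀, fun h hh => ?_⟩
  obtain ⟨X, hX, hsub⟩ := H h hh
  obtain ⟨n, rfl⟩ : ∃ n, r = n + 1 := ⟨r - 1, by omega⟩
  obtain ⟨k, rfl⟩ : ∃ k, m = k + 1 := ⟨m - 1, by have := hB.card_pos; omega⟩
  obtain ⟨Z, hZ, hZsub⟩ := hfold_cover_s15 B n
  rw [hm] at hZ
  refine ⟨X + Z, Finset.card_add_le.trans
    (Nat.mul_le_mul hX (hZ.trans (multichoose_bound k n))), ?_⟩
  rw [hfold_add_set, hfold_chromSum, hfold_succ_aux n (B : Set G), Finset.coe_add]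
  calc _ ⊆ ((X : Set G) + chromSum h A) + ((B : Set G) + (Z : Set G)) :=
        Set.add_subset_add hsub (Set.add_subset_add subset_rfl hZsub)
    _ = _ := by
        rw [add_comm (B : Set G), ← add_assoc, add_right_comm (X : Set G)]
end

section
/- (Asymptotic covering of threshold chromatic layers.) Let 𝒜 = (A₁,…,A_q) be a normalized tuple of finite nonempty sets of integers with a_i* := max A_i ≥ 1 for every i. Fix t, r ∈ ℕ. Then there exists a threshold vector h_{r,t} ∈ ℕ₀^q such that for every h ⪰ h_{r,t} there exists a set X_h ⊆ ℤ with |X_h| ≤ r + 2 and ((rh)·𝒜)^{(t)} ⊆ X_h + (h·𝒜)^{(t)}; that is, for each fixed t, the family of threshold-t chromatic layers forms an asymptotic (r, r+2)-approximate family. -/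
open Pointwise BigOperators

/-- The chromatic representation function: the number of tuples
`(a_{i,1},…,a_{i,h_i})_{i}` with `a_{i,j} ∈ A_i`, each color weakly increasing,
and total sum `n`. -/
noncomputable def chromRep {q : ℕ} (A : Fin q → Set ℤ) (h : Fin q → ℕ) (n : ℤ) : ℕ :=
  Nat.card {a : ∀ i : Fin q, Fin (h i) → ℤ //
    (∀ i j, a i j ∈ A i) ∧ (∀ i, Monotone (a i)) ∧ (∑ i, ∑ j, a i j) = n}

/-- The threshold-`t` chromatic layer `(h·𝒜)^{(t)} = {n : r_{𝒜,h}(n) ≥ t}`. -/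
def chromLayer {q : ℕ} (A : Fin q → Set ℤ) (h : Fin q → ℕ) (t : ℕ) : Set ℤ :=
  {n : ℤ | t ≤ chromRep A h n}


namespace Chrom

/-- multiset form of the representations -/
def S {q : ℕ} (A : Fin q → Set ℤ) (h : Fin q → ℕ) (n : ℤ) : Set (Fin q → Multiset ℤ) :=
  {m | (∀ i, (m i).card = h i) ∧ (∀ i, ∀ x ∈ m i, x ∈ A i) ∧ ∑ i, (m i).sum = n}

lemma chrom_finite {q : ℕ} (A : Fin q → Set ℤ) (hfin : ∀ i, (A i).Finite)
    (h : Fin q → ℕ) (n : ℤ) :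
    Finite {a : ∀ i : Fin q, Fin (h i) → ℤ //
    (∀ i j, a i j ∈ A i) ∧ (∀ i, Monotone (a i)) ∧ (∑ i, ∑ j, a i j) = n} := by
  have : (Set.pi Set.univ (fun i : Fin q => Set.pi Set.univ (fun _ : Fin (h i) => A i))).Finite :=
    Set.Finite.pi' (fun i => Set.Finite.pi' (fun _ => hfin i)) |>.subset (by
      intro x hx i j
      exact hx i trivial j trivial)
  exact (this.subset (fun a ha i _ j _ => ha.1 i j)).to_subtype

noncomputable def equiv {q : ℕ} (A : Fin q → Set ℤ) (h : Fin q → ℕ) (n : ℤ) :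
    {a : ∀ i : Fin q, Fin (h i) → ℤ //
    (∀ i j, a i j ∈ A i) ∧ (∀ i, Monotone (a i)) ∧ (∑ i, ∑ j, a i j) = n} ≃ S A h n := by
  refine Equiv.ofBijective (fun a => ⟨fun i => (List.ofFn (a.1 i) : Multiset ℤ), ?_, ?_, ?_⟩) ⟨?_, ?_⟩
  · intro i; simp
  · intro i x hx
    simp only [Multiset.mem_coe, List.mem_ofFn] at hx
    obtain ⟨j, rfl⟩ := hx
    exact a.2.1 i j
  · simp only [Multiset.sum_coe, List.sum_ofFn]
    exact a.2.2.2
  · rintro ⟨a, ha⟩ ⟨b, hb⟩ hab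
    rw [Subtype.mk.injEq]
    funext i
    have h1 := congrFun (congrArg Subtype.val hab) i
    simp only [Multiset.coe_eq_coe] at h1
    have := List.Perm.eq_of_sortedLE (List.sortedLE_ofFn_iff.2 (ha.2.1 i)) (List.sortedLE_ofFn_iff.2 (hb.2.1 i)) h1
    exact List.ofFn_injective this
  · rintro ⟨m, h1, h2, h3⟩
    have key : ∀ i, ∃ f : Fin (h i) → ℤ, Monotone f ∧ (List.ofFn f : Multiset ℤ) = m i := by
      intro i
      have hl : ((m i).sort (· ≤ ·)).length = h i := by simp [h1]
      refine ⟨fun j => ((m i).sort (· ≤ ·)).get (j.cast hl.symm), ?_, ?_⟩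
      · have : ((m i).sort (· ≤ ·)).SortedLE := (Multiset.pairwise_sort (m i) (· ≤ ·)).sortedLE
        exact fun x y hxy => this.monotone_get (by simpa using hxy)
      · conv_rhs => rw [← Multiset.sort_eq (m i) (· ≤ ·)]
        congr 1
        apply List.ext_get
        · simp [h1]
        · intro j _ _; simp
    choose f hf1 hf2 using key
    refine ⟨⟨f, ?_, hf1, ?_⟩, ?_⟩
    · intro i j
      apply h2 i
      rw [← hf2 i]
      simp [List.mem_ofFn]
    · rw [← h3]
      refine Finset.sum_congr rfl fun i _ => ?_
      rw [← hf2 i]; simp [List.sum_ofFn]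
    · ext1; funext i; exact hf2 i

lemma rep_eq {q : ℕ} (A : Fin q → Set ℤ) (h : Fin q → ℕ) (n : ℤ) :
    chromRep A h n = (S A h n).ncard := by
  rw [chromRep, Nat.card_congr (equiv A h n)]; rfl

lemma S_finite {q : ℕ} (A : Fin q → Set ℤ) (hfin : ∀ i, (A i).Finite)
    (h : Fin q → ℕ) (n : ℤ) : (S A h n).Finite := by
  have := chrom_finite A hfin h n
  have := Finite.of_equiv _ (equiv A h n)
  exact Set.toFinite _

lemma S_add {q : ℕ} {A : Fin q → Set ℤ} {h k : Fin q → ℕ} {n p : ℤ} {u v}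
    (hu : u ∈ S A h n) (hv : v ∈ S A k p) : u + v ∈ S A (h + k) (n + p) := by
  obtain ⟨a1, a2, a3⟩ := hu
  obtain ⟨b1, b2, b3⟩ := hv
  refine ⟨fun i => by simp [a1, b1], fun i x hx => ?_, ?_⟩
  · rcases Multiset.mem_add.1 hx with h | h
    exacts [a2 i x h, b2 i x h]
  · simp [Finset.sum_add_distrib, a3, b3]

lemma S_zero {q : ℕ} {A : Fin q → Set ℤ} : 0 ∈ S A 0 0 := by
  simp [S]

lemma S_nsmul {q : ℕ} {A : Fin q → Set ℤ} {h : Fin q → ℕ} {n : ℤ} {u}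
    (hu : u ∈ S A h n) (s : ℕ) : s • u ∈ S A (s • h) (s • n) := by
  induction s with
  | zero => simpa using S_zero
  | succ s ih => simpa only [succ_nsmul] using S_add ih hu

lemma S_pad {q : ℕ} {A : Fin q → Set ℤ} (h0 : ∀ i, 0 ∈ A i) (h : Fin q → ℕ) :
    (fun i => Multiset.replicate (h i) 0) ∈ S A h 0 := by
  refine ⟨by simp, fun i x hx => ?_, by simp⟩
  rw [Multiset.eq_of_mem_replicate hx]; exact h0 i

lemma S_mono {q : ℕ} {A : Fin q → Set ℤ} (h0 : ∀ i, 0 ∈ A i) {h k : Fin q → ℕ} (hk : h ≤ k)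
    {n : ℤ} (hn : (S A h n).Nonempty) : (S A k n).Nonempty := by
  obtain ⟨u, hu⟩ := hn
  have := S_add hu (S_pad h0 (k - h))
  rw [add_tsub_cancel_of_le hk, add_zero] at this
  exact ⟨_, this⟩

/-- low end -/
lemma low {q : ℕ} (A : Fin q → Set ℤ) (hfin : ∀ i, (A i).Finite)
    (hmin : ∀ i, (0 : ℤ) ∈ A i ∧ ∀ x ∈ A i, 0 ≤ x) (h k : Fin q → ℕ) (n : ℤ)
    (hn : ∀ i, n ≤ k i) : (S A h n).ncard ≤ (S A k n).ncard := by
  classical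
  have hsum : ∀ m : Multiset ℤ, (m.filter (· ≠ 0)).sum = m.sum := by
    intro m
    induction m using Multiset.induction_on with
    | empty => simp
    | cons a s ih =>
      by_cases ha : a = 0
      · subst ha; simpa using ih
      · rw [Multiset.filter_cons_of_pos (p := fun x : ℤ => x ≠ 0) s ha]; simp [ih]
  have hcard : ∀ m : Multiset ℤ, (∀ x ∈ m, 0 ≤ x) → ((m.filter (· ≠ 0)).card : ℤ) ≤ m.sum := by
    intro m
    induction m using Multiset.induction_on with
    | empty => simp
    | cons a s ih =>
      intro hm
      have h1 := ih (fun x hx => hm x (Multiset.mem_cons_of_mem hx))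
      have h2 := hm a (Multiset.mem_cons_self _ _)
      by_cases ha : a = 0
      · subst ha; simpa using h1
      · rw [Multiset.filter_cons_of_pos (p := fun x : ℤ => x ≠ 0) s ha]
        simp only [Multiset.card_cons, Multiset.sum_cons]
        push_cast
        omega
  refine Set.ncard_le_ncard_of_injOn
    (fun m i => (m i).filter (· ≠ 0) + Multiset.replicate (k i - ((m i).filter (· ≠ 0)).card) 0)
    ?_ ?_ (S_finite A hfin k n)
  · rintro m ⟨h1, h2, h3⟩
    refine ⟨fun i => ?_, fun i x hx => ?_, ?_⟩
    · have a1 := hcard (m i) (fun x hx => (hmin i).2 x (h2 i x hx))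
      have a2 : (m i).sum ≤ n := by
        rw [← h3]
        exact Finset.single_le_sum (f := fun i => (m i).sum)
          (fun j _ => Multiset.sum_nonneg (fun x hx => (hmin j).2 x (h2 j x hx))) (Finset.mem_univ i)
      have a3 := hn i
      simp only [Multiset.card_add, Multiset.card_replicate]
      omega
    · rcases Multiset.mem_add.1 hx with h | h
      · exact h2 i x (Multiset.mem_filter.1 h).1
      · rw [Multiset.eq_of_mem_replicate h]; exact (hmin i).1
    · simp only [Multiset.sum_add, hsum, Multiset.sum_replicate, smul_zero, add_zero]
      exact h3
  · rintro m ⟨h1, -, -⟩ m' ⟨h1', -, -⟩ hmm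
    funext i
    have e := congrFun hmm i
    have e2 := congrArg (Multiset.filter (· ≠ 0)) e
    simp only [Multiset.filter_add, Multiset.filter_filter, and_self] at e2
    have z : ∀ j, Multiset.filter (fun x : ℤ => x ≠ 0) (Multiset.replicate j 0) = 0 := by
      intro j; rw [Multiset.filter_eq_nil]; intro a ha; simp [Multiset.eq_of_mem_replicate ha]
    rw [z, z, add_zero, add_zero] at e2
    have rec' : ∀ m : Multiset ℤ, m = m.filter (· ≠ 0) +
        Multiset.replicate (m.card - (m.filter (· ≠ 0)).card) 0 := by
      intro m
      conv_lhs => rw [← Multiset.filter_add_not (· ≠ 0) m]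
      congr 1
      rw [Multiset.eq_replicate]
      constructor
      · have := congrArg Multiset.card (Multiset.filter_add_not (· ≠ 0) m)
        rw [Multiset.card_add] at this
        omega
      · intro b hb
        simpa using (Multiset.mem_filter.1 hb).2
    rw [rec' (m i), rec' (m' i), e2, h1 i, h1' i]

lemma refl {q : ℕ} (A B : Fin q → Set ℤ) (hfin : ∀ i, (B i).Finite) (a : Fin q → ℕ)
    (hB : ∀ i, ∀ x ∈ A i, (a i : ℤ) - x ∈ B i) (h : Fin q → ℕ) (n : ℤ) :
    (S A h n).ncard ≤ (S B h (∑ i, (a i : ℤ) * h i - n)).ncard := by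
  refine Set.ncard_le_ncard_of_injOn (fun m i => (m i).map (fun x => (a i : ℤ) - x))
    ?_ ?_ (S_finite B hfin _ _)
  · rintro m ⟨h1, h2, h3⟩
    refine ⟨fun i => by simp [h1], fun i x hx => ?_, ?_⟩
    · obtain ⟨y, hy, rfl⟩ := Multiset.mem_map.1 hx
      exact hB i y (h2 i y hy)
    · rw [← h3, ← Finset.sum_sub_distrib]
      refine Finset.sum_congr rfl fun i _ => ?_
      rw [Multiset.sum_map_sub, ← h1 i]
      simp [mul_comm]
  · intro m _ m' _ hmm
    funext i
    exact Multiset.map_injective (fun x y hxy => by simpa using hxy) (congrFun hmm i)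

lemma residues {q : ℕ} (A : Fin q → Set ℤ) (h0 : ∀ i, (0 : ℤ) ∈ A i)
    (hgcd : ∀ m : ℤ, (∀ i, ∀ x ∈ A i, m ∣ x) → IsUnit m) (P : ℕ) (hP : 0 < P) :
    ∃ k : Fin q → ℕ, ∀ s : ℤ, ∃ e, (S A k e).Nonempty ∧ (P : ℤ) ∣ s - e := by
  have step1 : ∀ s ∈ AddSubgroup.closure (⋃ i, A i), ∃ k : Fin q → ℕ, ∃ e,
      (S A k e).Nonempty ∧ (P : ℤ) ∣ s - e := by
    intro s hs
    induction hs using AddSubgroup.closure_induction with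
    | mem x hx =>
      obtain ⟨i, hi⟩ := Set.mem_iUnion.1 hx
      refine ⟨Pi.single i 1, x, ⟨Pi.single i {x}, ?_, ?_, ?_⟩, by simp⟩
      · intro j
        by_cases h : j = i
        · subst h; simp
        · simp [h]
      · intro j y hy
        by_cases h : j = i
        · subst h; simp at hy; subst hy; exact hi
        · simp [h] at hy
      · rw [Finset.sum_eq_single i]
        · simp
        · intro j _ h; simp [h]
        · simp
    | zero => exact ⟨0, 0, ⟨0, S_zero⟩, by simp⟩
    | add x y _ _ hx hy =>
      obtain ⟨k, e, ⟨u, hu⟩, d⟩ := hx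
      obtain ⟨k', e', ⟨u', hu'⟩, d'⟩ := hy
      refine ⟨_, _, ⟨_, S_add hu hu'⟩, ?_⟩
      have := dvd_add d d'
      rwa [show x + y - (e + e') = x - e + (y - e') by ring]
    | neg x _ hx =>
      obtain ⟨k, e, ⟨u, hu⟩, d⟩ := hx
      refine ⟨_, _, ⟨_, S_nsmul hu (P - 1)⟩, ?_⟩
      have : -x - (P - 1) • e = -(x - e) - P * e := by
        rw [nsmul_eq_mul, Nat.cast_sub (by omega)]; push_cast; ring
      rw [this]
      exact dvd_sub (dvd_neg.2 d) (dvd_mul_right _ _)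
  have top : ∀ s : ℤ, s ∈ AddSubgroup.closure (⋃ i, A i) := by
    obtain ⟨g, hg⟩ := Int.subgroup_cyclic (AddSubgroup.closure (⋃ i, A i))
    have hu : IsUnit g := hgcd g (fun i x hx => by
      have : x ∈ AddSubgroup.closure (⋃ i, A i) :=
        AddSubgroup.subset_closure (Set.mem_iUnion.2 ⟨i, hx⟩)
      rw [hg] at this
      exact Int.mem_zmultiples_iff.1 (by rwa [AddSubgroup.zmultiples_eq_closure]))
    intro s
    rw [hg, ← AddSubgroup.zmultiples_eq_closure, Int.mem_zmultiples_iff]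
    exact hu.dvd
  choose k e hk he using fun s => step1 s (top s)
  refine ⟨∑ s ∈ Finset.range P, k s, fun s => ⟨e (s % P), ?_, ?_⟩⟩
  · have h1 : 0 ≤ s % P := Int.emod_nonneg _ (by omega)
    have h2 : s % P < P := Int.emod_lt_of_pos _ (by omega)
    refine S_mono h0 ?_ (hk _)
    have : k (s % P) = k (((s % P).toNat : ℕ) : ℤ) := by rw [Int.toNat_of_nonneg h1]
    rw [this]
    exact Finset.single_le_sum (f := fun j : ℕ => k (j : ℤ)) (fun _ _ => zero_le)
      (Finset.mem_range.2 (by omega))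
  · have := he (s % P)
    have h3 : (P : ℤ) ∣ s - s % P := Int.dvd_self_sub_emod
    have := dvd_add h3 this
    simpa using this

lemma split {ι : Type*} (s : Finset ι) (f : ι → ℕ) (w : ℕ) (hw : w ≤ ∑ i ∈ s, f i) :
    ∃ g : ι → ℕ, (∀ i ∈ s, g i ≤ f i) ∧ ∑ i ∈ s, g i = w := by
  classical
  induction s using Finset.induction_on generalizing w with
  | empty => exact ⟨0, by simp, by simp at hw; simp [hw]⟩
  | insert a s ha ih =>
    rw [Finset.sum_insert ha] at hw
    obtain ⟨g, h1, h2⟩ := ih (w - min w (f a)) (by omega)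
    refine ⟨Function.update g a (min w (f a)), ?_, ?_⟩
    · intro i hi
      by_cases h : i = a
      · subst h; simp
      · simp only [Function.update_of_ne h]
        exact h1 i (Finset.mem_of_mem_insert_of_ne hi h)
    · rw [Finset.sum_insert ha, Function.update_self]
      have : ∑ x ∈ s, Function.update g a (min w (f a)) x = ∑ x ∈ s, g x := by
        refine Finset.sum_congr rfl fun i hi => ?_
        rw [Function.update_of_ne]; rintro rfl; exact ha hi
      rw [this, h2]; omega

lemma S_range {q : ℕ} {A : Fin q → Set ℤ} (hmin : ∀ i, (0 : ℤ) ∈ A i ∧ ∀ x ∈ A i, 0 ≤ x)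
    (a : Fin q → ℕ) (ha : ∀ i, ∀ x ∈ A i, x ≤ a i) {h : Fin q → ℕ} {n : ℤ}
    (hn : (S A h n).Nonempty) : 0 ≤ n ∧ n ≤ ∑ i, (a i : ℤ) * h i := by
  obtain ⟨m, h1, h2, rfl⟩ := hn
  constructor
  · exact Finset.sum_nonneg fun i _ => Multiset.sum_nonneg fun x hx => (hmin i).2 x (h2 i x hx)
  · refine Finset.sum_le_sum fun i _ => ?_
    have := Multiset.sum_le_card_nsmul (m i) (a i : ℤ) (fun x hx => ha i x (h2 i x hx))
    rw [h1, nsmul_eq_mul] at this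
    linarith

lemma mid1 {q : ℕ} (A : Fin q → Set ℤ)
    (hmin : ∀ i, (0 : ℤ) ∈ A i ∧ ∀ x ∈ A i, 0 ≤ x)
    (hgcd : ∀ m : ℤ, (∀ i, ∀ x ∈ A i, m ∣ x) → IsUnit m)
    (a : Fin q → ℕ) (ha1 : ∀ i, 1 ≤ a i) (haA : ∀ i, (a i : ℤ) ∈ A i)
    (ha : ∀ i, ∀ x ∈ A i, x ≤ a i) :
    ∃ (k : Fin q → ℕ) (c : ℕ), ∀ h, k ≤ h → ∀ n : ℤ, c ≤ n → n ≤ ∑ i, (a i : ℤ) * h i - c →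
      (S A h n).Nonempty := by
  set P : ℕ := ∏ i, a i with hPdef
  have hP : 0 < P := Finset.prod_pos fun i _ => ha1 i
  obtain ⟨k, hk⟩ := residues A (fun i => (hmin i).1) hgcd P hP
  refine ⟨k, ∑ i, a i * k i + q * P, fun h hkh n hn1 hn2 => ?_⟩
  obtain ⟨e, he, w', hw'⟩ := hk n
  have hr := S_range hmin a ha he
  push_cast at hn1 hn2
  have hPZ : (0 : ℤ) < P := by exact_mod_cast hP
  have hqP : (0 : ℤ) ≤ q * P := by positivity
  have w0 : 0 ≤ w' := by
    by_contra hcon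
    have : (P : ℤ) * w' < 0 := by nlinarith
    linarith
  obtain ⟨w, rfl⟩ := Int.eq_ofNat_of_zero_le w0
  have hf : ∀ i, (h i - k i) * a i ≤ P * ((h i - k i) * a i / P) + P := by
    intro i
    have := Nat.div_add_mod ((h i - k i) * a i) P
    have := Nat.mod_lt ((h i - k i) * a i) hP
    omega
  have hf2 : (∑ i, (a i : ℤ) * h i) - ∑ i, (a i : ℤ) * k i ≤
      P * (∑ i, ((h i - k i) * a i / P) : ℕ) + q * P := by
    rw [← Finset.sum_sub_distrib]
    push_cast
    rw [Finset.mul_sum]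
    have : (q : ℤ) * P = ∑ i : Fin q, (P : ℤ) := by simp
    rw [this, ← Finset.sum_add_distrib]
    refine Finset.sum_le_sum fun i _ => ?_
    have := hf i
    have h7 := hkh i
    have h8 : (a i : ℤ) * h i - a i * k i = ((h i - k i : ℕ) : ℤ) * a i := by
      rw [Nat.cast_sub h7]; ring
    rw [h8]
    exact_mod_cast this
  have hw : w ≤ ∑ i, ((h i - k i) * a i / P) := by
    have : (P : ℤ) * w ≤ P * (∑ i, ((h i - k i) * a i / P) : ℕ) := by
      linarith
    have := le_of_mul_le_mul_left this hPZ
    exact_mod_cast this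
  obtain ⟨g, hg1, hg2⟩ := split _ _ _ hw
  have hdiv : ∀ i, P / a i * a i = P := fun i =>
    Nat.div_mul_cancel (Finset.dvd_prod_of_mem a (Finset.mem_univ i))
  have hx : ∀ i, g i * (P / a i) ≤ h i - k i := by
    intro i
    have h1 := hg1 i (Finset.mem_univ i)
    have h2 : g i * (P / a i) * a i ≤ (h i - k i) * a i := by
      rw [mul_assoc, hdiv]
      exact (Nat.mul_le_mul_right _ h1).trans (Nat.div_mul_le_self _ _)
    exact Nat.le_of_mul_le_mul_right h2 (ha1 i)
  have mem : (fun i => Multiset.replicate (g i * (P / a i)) (a i : ℤ) +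
      Multiset.replicate (h i - k i - g i * (P / a i)) 0) ∈ S A (h - k) (P * w) := by
    refine ⟨fun i => ?_, fun i x hx => ?_, ?_⟩
    · have := hx i
      simp only [Multiset.card_add, Multiset.card_replicate, Pi.sub_apply]; omega
    · rcases Multiset.mem_add.1 hx with h | h
      · rw [Multiset.eq_of_mem_replicate h]; exact haA i
      · rw [Multiset.eq_of_mem_replicate h]; exact (hmin i).1
    · rw [← hg2]
      push_cast
      rw [Finset.mul_sum]
      refine Finset.sum_congr rfl fun i _ => ?_
      have := hdiv i
      zify at this
      simp only [Multiset.sum_add, Multiset.sum_replicate, smul_zero, add_zero, nsmul_eq_mul]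
      push_cast
      rw [mul_assoc, this]; ring
  obtain ⟨u, hu⟩ := he
  have := S_add hu mem
  rw [add_tsub_cancel_of_le hkh] at this
  have e2 : e + P * (w : ℤ) = n := by
    linarith
  rw [e2] at this
  exact ⟨_, this⟩

lemma midt {q : ℕ} (A : Fin q → Set ℤ) (hfin : ∀ i, (A i).Finite)
    (hmin : ∀ i, (0 : ℤ) ∈ A i ∧ ∀ x ∈ A i, 0 ≤ x)
    (hgcd : ∀ m : ℤ, (∀ i, ∀ x ∈ A i, m ∣ x) → IsUnit m)
    (a : Fin q → ℕ) (ha1 : ∀ i, 1 ≤ a i) (haA : ∀ i, (a i : ℤ) ∈ A i)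
    (ha : ∀ i, ∀ x ∈ A i, x ≤ a i) (t : ℕ)
    (b : Fin q → ℕ) (p : ℤ) (hb : t ≤ (S A b p).ncard) (hb0 : (S A b p).Nonempty) :
    ∃ (k : Fin q → ℕ) (c : ℕ), ∀ h, k ≤ h → ∀ n : ℤ, c ≤ n → n ≤ ∑ i, (a i : ℤ) * h i - c →
      t ≤ (S A h n).ncard := by
  obtain ⟨k, c, H⟩ := mid1 A hmin hgcd a ha1 haA ha
  have hp := S_range hmin a ha hb0
  refine ⟨k + b, c + ∑ i, a i * b i, fun h hh n hn1 hn2 => ?_⟩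
  push_cast at hn1 hn2
  have hbh : b ≤ h := le_trans (le_add_of_nonneg_left (zero_le)) hh
  have hkh : k ≤ h - b := le_tsub_of_add_le_right hh
  have hN : ∑ i, (a i : ℤ) * ((h - b) i : ℕ) = ∑ i, (a i : ℤ) * h i - ∑ i, (a i : ℤ) * b i := by
    rw [← Finset.sum_sub_distrib]
    refine Finset.sum_congr rfl fun i _ => ?_
    rw [Pi.sub_apply, Nat.cast_sub (hbh i)]; ring
  obtain ⟨u, hu⟩ := H (h - b) hkh (n - p) (by linarith) (by rw [hN]; linarith)
  refine hb.trans (Set.ncard_le_ncard_of_injOn (fun v => u + v) ?_ ?_ (S_finite A hfin _ _))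
  · intro v hv
    have := S_add hu hv
    rwa [tsub_add_cancel_of_le hbh, sub_add_cancel] at this
  · intro v _ v' _ h; exact add_left_cancel h

end Chrom

open Chrom


theorem stmt17 {q : ℕ} (A : Fin q → Set ℤ)
    (hfin : ∀ i, (A i).Finite) (hne : ∀ i, (A i).Nonempty)
    (hmin : ∀ i, (0 : ℤ) ∈ A i ∧ ∀ x ∈ A i, 0 ≤ x)
    (hgcd : ∀ m : ℤ, (∀ i, ∀ x ∈ A i, m ∣ x) → IsUnit m)
    (hmax : ∀ i, ∃ x ∈ A i, 1 ≤ x)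
    (t r : ℕ) (ht : 0 < t) (hr : 0 < r) :
    ∃ h₀ : Fin q → ℕ, ∀ h : Fin q → ℕ, (∀ i, h₀ i ≤ h i) →
      ∃ X : Finset ℤ, X.card ≤ r + 2 ∧
        chromLayer A (fun i => r * h i) t ⊆ ↑X + chromLayer A h t := by
  classical
  have hq : 0 < q := by
    rcases Nat.eq_zero_or_pos q with rfl | h
    · exact absurd (hgcd 0 (fun i => i.elim0)) (by simp)
    · exact h
  have hex : ∀ i, ∃ a : ℕ, 1 ≤ a ∧ (a : ℤ) ∈ A i ∧ ∀ x ∈ A i, x ≤ a := by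
    intro i
    obtain ⟨m, hm, hm2⟩ := Set.exists_max_image (A i) id (hfin i) (hne i)
    obtain ⟨x, hx, hx1⟩ := hmax i
    have := hm2 x hx
    simp only [id] at this hm2
    refine ⟨m.toNat, by omega, ?_, fun y hy => ?_⟩
    · rwa [Int.toNat_of_nonneg (by omega)]
    · have := hm2 y hy; omega
  choose a ha1 haA ha using hex
  have key : (∃ b p, t ≤ (S A b p).ncard ∧ (S A b p).Nonempty) ∨
      ∀ k p, (S A k p).ncard < t := by
    by_cases hall : ∀ k p, (S A k p).ncard < t
    · exact Or.inr hall
    · push Not at hall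
      obtain ⟨b, p, hbp⟩ := hall
      exact Or.inl ⟨b, p, hbp, Set.nonempty_of_ncard_ne_zero (by omega)⟩
  rcases key with ⟨b, p, hb, hb0⟩ | hsub
  swap
  · refine ⟨0, fun h _ => ⟨∅, by simp, fun n hn => ?_⟩⟩
    have h1 : t ≤ chromRep A (fun i => r * h i) n := hn
    rw [rep_eq] at h1
    exact absurd (hsub (fun i => r * h i) n) (by omega)
  obtain ⟨k, c, H⟩ := midt A hfin hmin hgcd a ha1 haA ha t b p hb hb0
  refine ⟨fun i => k i + (2 * c + 2 * c * r + 1), fun h hh => ?_⟩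
  set N : ℤ := ∑ i, (a i : ℤ) * h i with hN
  have hNbig : (2 * c + 2 * c * r + 1 : ℤ) ≤ N := by
    have h1 := hh ⟨0, hq⟩
    have h2 : (a ⟨0, hq⟩ : ℤ) * h ⟨0, hq⟩ ≤ N :=
      Finset.single_le_sum (f := fun i => (a i : ℤ) * h i) (fun i _ => by positivity)
        (Finset.mem_univ _)
    have h3 := ha1 ⟨0, hq⟩
    have h4 : h ⟨0, hq⟩ ≤ a ⟨0, hq⟩ * h ⟨0, hq⟩ := Nat.le_mul_of_pos_left _ h3
    have h5 : 2 * c + 2 * c * r + 1 ≤ a ⟨0, hq⟩ * h ⟨0, hq⟩ := by linarith [Nat.zero_le (k ⟨0, hq⟩)]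
    have h6 : ((2 * c + 2 * c * r + 1 : ℕ) : ℤ) ≤ ((a ⟨0, hq⟩ * h ⟨0, hq⟩ : ℕ) : ℤ) := by
      exact_mod_cast h5
    push_cast at h6
    linarith
  have hrN : ∑ i, (a i : ℤ) * ((r * h i : ℕ) : ℤ) = r * N := by
    rw [hN, Finset.mul_sum]
    refine Finset.sum_congr rfl fun i _ => ?_
    push_cast; ring
  have hc : ∀ i, (c : ℤ) ≤ h i := by
    intro i
    have := hh i
    have : c ≤ h i := by linarith [Nat.zero_le (k i), Nat.zero_le (2 * c * r)]
    exact_mod_cast this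
  set L : ℤ := N - 2 * c with hL
  have hL1 : 2 * c * r + 1 ≤ L := by linarith
  have hcr : (0 : ℤ) ≤ 2 * c * r := by positivity
  refine ⟨insert ((r - 1 : ℤ) * N) ((Finset.range (r + 1)).image (fun j : ℕ => (j : ℤ) * L)), ?_, ?_⟩
  · refine (Finset.card_insert_le _ _).trans ?_
    have := Finset.card_image_le (s := Finset.range (r + 1)) (f := fun j : ℕ => (j : ℤ) * L)
    rw [Finset.card_range] at this
    omega
  intro n hn
  have hn1 : t ≤ chromRep A (fun i => r * h i) n := hn
  rw [rep_eq] at hn1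
  suffices hs : ∃ x ∈ insert ((r - 1 : ℤ) * N) ((Finset.range (r + 1)).image (fun j : ℕ => (j : ℤ) * L)),
      t ≤ (S A h (n - x)).ncard by
    obtain ⟨x, hx, hx2⟩ := hs
    rw [← rep_eq] at hx2
    exact Set.mem_add.2 ⟨x, Finset.mem_coe.2 hx, n - x, hx2, by ring⟩
  rcases le_or_gt n c with hlow | hlow
  · refine ⟨0, Finset.mem_insert_of_mem (Finset.mem_image.2 ⟨0, by simp, by simp⟩), ?_⟩
    rw [sub_zero]
    exact hn1.trans (low A hfin hmin _ h n (fun i => hlow.trans (hc i)))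
  rcases le_or_gt (r * N - c) n with hhigh | hhigh
  · refine ⟨(r - 1 : ℤ) * N, Finset.mem_insert_self _ _, hn1.trans ?_⟩
    set B : Fin q → Set ℤ := fun i => (fun x => (a i : ℤ) - x) '' A i with hB
    have hBfin : ∀ i, (B i).Finite := fun i => (hfin i).image _
    have hBmin : ∀ i, (0 : ℤ) ∈ B i ∧ ∀ x ∈ B i, 0 ≤ x := by
      intro i
      refine ⟨⟨a i, haA i, by simp⟩, ?_⟩
      rintro _ ⟨y, hy, rfl⟩
      have := ha i y hy
      simp only; omega
    have s1 := refl A B hBfin a (fun i x hx => ⟨x, hx, rfl⟩) (fun i => r * h i) n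
    rw [hrN] at s1
    have s2 := low B hBfin hBmin (fun i => r * h i) h (r * N - n)
      (fun i => by have := hc i; linarith)
    have s3 := refl B A hfin a (by
      rintro i _ ⟨y, hy, rfl⟩
      simpa using hy) h (r * N - n)
    have e : ∑ i, (a i : ℤ) * h i - (r * N - n) = n - (r - 1) * N := by rw [← hN]; ring
    rw [e] at s3
    exact s1.trans (s2.trans s3)
  · have hLpos : 0 < L := by linarith
    have d1 := Int.emod_add_mul_ediv (n - c) L
    have d2 := Int.emod_nonneg (n - c) hLpos.ne'
    have d3 := Int.emod_lt_of_pos (n - c) hLpos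
    have j0 : 0 ≤ (n - c) / L := Int.ediv_nonneg (by linarith) hLpos.le
    have j1 : (n - c) / L < r + 1 := by
      apply Int.ediv_lt_of_lt_mul hLpos
      have : (r : ℤ) * N = r * L + 2 * c * r := by rw [hL]; ring
      have hc0 : (0 : ℤ) ≤ c := by positivity
      linarith
    refine ⟨(n - c) / L * L, Finset.mem_insert_of_mem (Finset.mem_image.2
      ⟨((n - c) / L).toNat, ?_, ?_⟩), ?_⟩
    · rw [Finset.mem_range]; omega
    · rw [Int.toNat_of_nonneg j0]
    · apply H h (fun i => le_trans (Nat.le_add_right _ _) (hh i))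
      · linarith
      · rw [← hN]; linarith
end

section
/- Let 𝒜' = (A₁',…,A_q') be any tuple of nonempty finite sets of integers, and fix t, r ∈ ℕ. Then there exists a threshold vector h_{r,t} ∈ ℕ₀^q such that for every h ⪰ h_{r,t} there exists a set X_h ⊆ ℤ with |X_h| ≤ r + 2 and ((rh)·𝒜')^{(t)} ⊆ X_h + (h·𝒜')^{(t)}. -/
open Pointwise BigOperators

/-- Representations as tuples of multisets. -/
def RepSet {q : ℕ} (A : Fin q → Set ℤ) (h : Fin q → ℕ) (n : ℤ) : Set (Fin q → Multiset ℤ) :=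
  {s | (∀ i, (s i).card = h i) ∧ (∀ i, ∀ x ∈ s i, x ∈ A i) ∧ ∑ i, (s i).sum = n}

theorem chromRep_eq {q : ℕ} (A : Fin q → Set ℤ) (h : Fin q → ℕ) (n : ℤ) :
    chromRep A h n = (RepSet A h n).ncard := by
  unfold chromRep
  rw [← Nat.card_coe_set_eq]
  refine Nat.card_eq_of_bijective
    (fun a => ⟨fun i => (List.ofFn (a.1 i) : Multiset ℤ), ?_, ?_, ?_⟩) ⟨?_, ?_⟩
  · intro i; simp
  · intro i x hx
    simp only [Multiset.mem_coe, List.mem_ofFn] at hx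
    obtain ⟨j, rfl⟩ := hx
    exact a.2.1 i j
  · have := a.2.2.2
    simpa [List.sum_ofFn] using this
  · rintro ⟨a, ha⟩ ⟨b, hb⟩ hab
    apply Subtype.ext
    funext i
    have h1 := congrFun (congrArg Subtype.val hab) i
    have h2 : List.Perm (List.ofFn (a i)) (List.ofFn (b i)) := Multiset.coe_eq_coe.1 h1
    exact List.ofFn_injective (h2.eq_of_sortedLE (ha.2.1 i).sortedLE_ofFn (hb.2.1 i).sortedLE_ofFn)
  · rintro ⟨s, hs1, hs2, hs3⟩
    have key : ∀ i, ∃ f : Fin (h i) → ℤ, Monotone f ∧ (List.ofFn f : Multiset ℤ) = s i := by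
      intro i
      have hl : ((s i).sort (· ≤ ·)).length = h i := by rw [Multiset.length_sort, hs1]
      have hp : ((s i).sort (· ≤ ·)).SortedLE := (Multiset.pairwise_sort (s i) (· ≤ ·)).sortedLE
      have he := Multiset.sort_eq (s i) (· ≤ ·)
      generalize (s i).sort (· ≤ ·) = l at hl hp he
      generalize h i = k at hl
      subst hl
      refine ⟨l.get, hp, ?_⟩
      rw [List.ofFn_get, he]
    choose f hf1 hf2 using key
    refine ⟨⟨f, ?_, hf1, ?_⟩, ?_⟩
    · intro i j
      apply hs2 i
      rw [← hf2 i]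
      simp
    · rw [← hs3]
      refine Finset.sum_congr rfl fun i _ => ?_
      rw [← hf2 i]
      simp [List.sum_ofFn]
    · apply Subtype.ext
      funext i
      exact hf2 i

theorem repSet_finite {q : ℕ} (A : Fin q → Set ℤ) (hfin : ∀ i, (A i).Finite)
    (h : Fin q → ℕ) (n : ℤ) : (RepSet A h n).Finite := by
  have : (Set.univ.pi fun i => Set.Iic (h i • (hfin i).toFinset.val)).Finite :=
    Set.Finite.pi fun i => Set.finite_Iic _
  refine this.subset ?_
  rintro s ⟨h1, h2, h3⟩ i -
  rw [Set.mem_Iic, Multiset.le_iff_count]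
  intro x
  by_cases hx : x ∈ s i
  · rw [Multiset.count_nsmul, Multiset.count_eq_one_of_mem (hfin i).toFinset.nodup
      (by simpa using h2 i x hx), ← h1 i]
    simpa using Multiset.count_le_card x (s i)
  · rw [Multiset.count_eq_zero_of_notMem hx]; exact Nat.zero_le _

theorem repSet_add {q : ℕ} {A : Fin q → Set ℤ} {h k : Fin q → ℕ} {n m : ℤ}
    {s u : Fin q → Multiset ℤ} (hs : s ∈ RepSet A h n) (hu : u ∈ RepSet A k m) :
    s + u ∈ RepSet A (h + k) (n + m) := by
  obtain ⟨h1, h2, h3⟩ := hs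
  obtain ⟨k1, k2, k3⟩ := hu
  refine ⟨fun i => by simp [h1, k1], fun i x hx => ?_, ?_⟩
  · rcases Multiset.mem_add.1 hx with hx | hx
    exacts [h2 i x hx, k2 i x hx]
  · simp [Finset.sum_add_distrib, h3, k3]

theorem nonempty_add {q : ℕ} {A : Fin q → Set ℤ} {h k : Fin q → ℕ} {n m : ℤ}
    (hs : (RepSet A h n).Nonempty) (hu : (RepSet A k m).Nonempty) :
    (RepSet A (h + k) (n + m)).Nonempty := by
  obtain ⟨s, hs⟩ := hs
  obtain ⟨u, hu⟩ := hu
  exact ⟨_, repSet_add hs hu⟩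

theorem nonempty_zero {q : ℕ} (A : Fin q → Set ℤ) : (RepSet A 0 0).Nonempty :=
  ⟨0, by simp [RepSet]⟩

theorem ncard_add {q : ℕ} {A : Fin q → Set ℤ} (hfin : ∀ i, (A i).Finite)
    {h k : Fin q → ℕ} {n m : ℤ} (hs : (RepSet A h n).Nonempty) :
    (RepSet A k m).ncard ≤ (RepSet A (h + k) (n + m)).ncard := by
  obtain ⟨s, hs⟩ := hs
  exact Set.ncard_le_ncard_of_injOn (fun u => s + u) (fun u hu => repSet_add hs hu)
    (fun u _ v _ huv => add_left_cancel huv) (repSet_finite A hfin _ _)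

/-- Removing forced copies of `b i`. -/
theorem ncard_remove {q : ℕ} {A : Fin q → Set ℤ} (hfin : ∀ i, (A i).Finite)
    {h k : Fin q → ℕ} {n m : ℤ} (b : Fin q → ℤ)
    (hc : ∀ s ∈ RepSet A (h + k) n, ∀ i, k i ≤ (s i).count (b i))
    (hm : m = n - ∑ i, k i * b i) :
    (RepSet A (h + k) n).ncard ≤ (RepSet A h m).ncard := by
  have hle : ∀ s ∈ RepSet A (h + k) n, ∀ i, Multiset.replicate (k i) (b i) ≤ s i :=
    fun s hs i => Multiset.le_count_iff_replicate_le.1 (hc s hs i)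
  refine Set.ncard_le_ncard_of_injOn (fun s i => s i - Multiset.replicate (k i) (b i))
    ?_ ?_ (repSet_finite A hfin _ _)
  · intro s hs
    have hle' := hle s hs
    obtain ⟨h1, h2, h3⟩ := hs
    refine ⟨fun i => ?_, fun i x hx => ?_, ?_⟩
    · rw [Multiset.card_sub (hle' i), h1 i]; simp
    · exact h2 i x (Multiset.mem_of_le (Multiset.sub_le_self _ _) hx)
    · rw [hm, ← h3, ← Finset.sum_sub_distrib]
      refine Finset.sum_congr rfl fun i _ => ?_
      have := congrArg Multiset.sum (tsub_add_cancel_of_le (hle' i))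
      rw [Multiset.sum_add, Multiset.sum_replicate] at this
      simp only [nsmul_eq_mul] at this
      linarith
  · intro s hs u hu hsu
    funext i
    have := congrFun hsu i
    simp only at this
    rw [← tsub_add_cancel_of_le (hle s hs i), this, tsub_add_cancel_of_le (hle u hu i)]

theorem noncopies_le (s : Multiset ℤ) (a : ℤ) (hs : ∀ x ∈ s, a ≤ x) :
    (s.card : ℤ) - s.count a ≤ s.sum - s.card * a := by
  induction s using Multiset.induction_on with
  | empty => simp
  | cons x s ih =>
    have h1 := ih fun y hy => hs y (Multiset.mem_cons_of_mem hy)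
    have h2 := hs x (Multiset.mem_cons_self x s)
    simp only [Multiset.card_cons, Multiset.sum_cons, Nat.cast_add, Nat.cast_one]
    by_cases hx : a = x
    · subst hx; rw [Multiset.count_cons_self]; push_cast; linarith
    · rw [Multiset.count_cons_of_ne hx]
      have : a + 1 ≤ x := by omega
      linarith

theorem noncopies_ge (s : Multiset ℤ) (a : ℤ) (hs : ∀ x ∈ s, x ≤ a) :
    (s.card : ℤ) - s.count a ≤ s.card * a - s.sum := by
  induction s using Multiset.induction_on with
  | empty => simp
  | cons x s ih =>
    have h1 := ih fun y hy => hs y (Multiset.mem_cons_of_mem hy)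
    have h2 := hs x (Multiset.mem_cons_self x s)
    simp only [Multiset.card_cons, Multiset.sum_cons, Nat.cast_add, Nat.cast_one]
    by_cases hx : a = x
    · subst hx; rw [Multiset.count_cons_self]; push_cast; linarith
    · rw [Multiset.count_cons_of_ne hx]
      have : x + 1 ≤ a := by omega
      linarith

theorem low_count {q : ℕ} {A : Fin q → Set ℤ} {a : Fin q → ℤ} (ha : ∀ i, ∀ x ∈ A i, a i ≤ x)
    {h : Fin q → ℕ} {n : ℤ} {s : Fin q → Multiset ℤ} (hs : s ∈ RepSet A h n) (i : Fin q) :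
    (h i : ℤ) - (s i).count (a i) ≤ n - ∑ i, h i * a i := by
  obtain ⟨h1, h2, h3⟩ := hs
  have key : ∀ i, (h i : ℤ) - (s i).count (a i) ≤ (s i).sum - h i * a i := by
    intro i
    have := noncopies_le (s i) (a i) fun x hx => ha i x (h2 i x hx)
    rwa [h1 i] at this
  rw [← h3, ← Finset.sum_sub_distrib]
  refine (key i).trans (Finset.single_le_sum (f := fun i => (s i).sum - h i * a i)
    (fun j _ => le_trans ?_ (key j)) (Finset.mem_univ i))
  have := Multiset.count_le_card (a j) (s j)
  rw [h1 j] at this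
  simpa using this

theorem high_count {q : ℕ} {A : Fin q → Set ℤ} {a : Fin q → ℤ} (ha : ∀ i, ∀ x ∈ A i, x ≤ a i)
    {h : Fin q → ℕ} {n : ℤ} {s : Fin q → Multiset ℤ} (hs : s ∈ RepSet A h n) (i : Fin q) :
    (h i : ℤ) - (s i).count (a i) ≤ (∑ i, h i * a i) - n := by
  obtain ⟨h1, h2, h3⟩ := hs
  have key : ∀ i, (h i : ℤ) - (s i).count (a i) ≤ h i * a i - (s i).sum := by
    intro i
    have := noncopies_ge (s i) (a i) fun x hx => ha i x (h2 i x hx)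
    rwa [h1 i] at this
  rw [← h3, ← Finset.sum_sub_distrib]
  refine (key i).trans (Finset.single_le_sum (f := fun i => h i * a i - (s i).sum)
    (fun j _ => le_trans ?_ (key j)) (Finset.mem_univ i))
  have := Multiset.count_le_card (a j) (s j)
  rw [h1 j] at this
  simpa using this

theorem low_bound {q : ℕ} {A : Fin q → Set ℤ} {a : Fin q → ℤ} (ha : ∀ i, ∀ x ∈ A i, a i ≤ x)
    {h : Fin q → ℕ} {n : ℤ} (hs : (RepSet A h n).Nonempty) : ∑ i, h i * a i ≤ n := by
  obtain ⟨s, h1, h2, h3⟩ := hs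
  rw [← h3]
  refine Finset.sum_le_sum fun i _ => ?_
  have := Multiset.card_nsmul_le_sum (s := s i) (a := a i) fun x hx => ha i x (h2 i x hx)
  simpa [h1 i] using this

theorem high_bound {q : ℕ} {A : Fin q → Set ℤ} {a : Fin q → ℤ} (ha : ∀ i, ∀ x ∈ A i, x ≤ a i)
    {h : Fin q → ℕ} {n : ℤ} (hs : (RepSet A h n).Nonempty) : n ≤ ∑ i, h i * a i := by
  obtain ⟨s, h1, h2, h3⟩ := hs
  rw [← h3]
  refine Finset.sum_le_sum fun i _ => ?_
  have := Multiset.sum_le_card_nsmul (s i) (a i) fun x hx => ha i x (h2 i x hx)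
  simpa [h1 i] using this

theorem nonempty_const {q : ℕ} {A : Fin q → Set ℤ} {a : Fin q → ℤ} (ha : ∀ i, a i ∈ A i)
    (h : Fin q → ℕ) : (RepSet A h (∑ i, h i * a i)).Nonempty := by
  refine ⟨fun i => Multiset.replicate (h i) (a i), fun i => by simp, fun i x hx => ?_, by simp⟩
  rw [Multiset.eq_of_mem_replicate hx]; exact ha i

theorem progression {q : ℕ} {A : Fin q → Set ℤ} {K : Fin q → ℕ} {τ g : ℤ}
    (h0 : (RepSet A K τ).Nonempty) (h1 : (RepSet A K (τ + g)).Nonempty) (L : ℕ) :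
    ∀ j : ℕ, j ≤ L → (RepSet A (L • K) (L * τ + j * g)).Nonempty := by
  induction L with
  | zero =>
    intro j hj
    obtain rfl : j = 0 := by omega
    simpa using nonempty_zero A
  | succ L ih =>
    intro j hj
    rcases Nat.eq_or_lt_of_le hj with rfl | hj
    · have := nonempty_add (ih L le_rfl) h1
      rw [succ_nsmul]
      convert this using 2
      push_cast; ring
    · have := nonempty_add (ih j (by omega)) h0
      rw [succ_nsmul]
      convert this using 2
      push_cast; ring

theorem chain_step {q : ℕ} (e : Fin q → ℤ) (he : ∀ i, 0 ≤ e i) (m : ℤ) (hm : ∀ i, e i ≤ m)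
    (hm0 : 0 ≤ m) (h : Fin q → ℕ) (z : ℕ) (hz : (z : ℤ) ≤ ∑ i, h i * e i) :
    ∃ j : Fin q → ℕ, (∀ i, j i ≤ h i) ∧ ∑ i, j i * e i ≤ z ∧ z ≤ ∑ i, j i * e i + m := by
  induction z with
  | zero => exact ⟨0, by simp, by simp, by simpa using hm0⟩
  | succ z ih =>
    obtain ⟨j, hj, h1, h2⟩ := ih (by push_cast at hz; linarith)
    push_cast at hz ⊢
    by_cases hlt : (z : ℤ) + 1 ≤ ∑ i, j i * e i + m
    · exact ⟨j, hj, by linarith, hlt⟩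
    by_cases hex : ∃ i, j i < h i ∧ 0 < e i
    · obtain ⟨i, hi, hei⟩ := hex
      have hs : ∑ k, ((j + Pi.single i 1 : Fin q → ℕ) k : ℤ) * e k = ∑ k, j k * e k + e i := by
        simp [add_mul, Finset.sum_add_distrib, Pi.single_apply]
      refine ⟨j + Pi.single i 1, fun k => ?_, ?_, ?_⟩
      · by_cases hk : k = i
        · subst hk; simpa using hi
        · simpa [hk] using hj k
      · rw [hs]; have := hm i; linarith
      · rw [hs]; linarith
    · exfalso
      push Not at hex
      have : ∑ i, (h i : ℤ) * e i = ∑ i, j i * e i := by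
        refine Finset.sum_congr rfl fun i _ => ?_
        rcases Nat.eq_or_lt_of_le (hj i) with hh | hh
        · rw [hh]
        · have : e i = 0 := le_antisymm (hex i hh) (he i)
          simp [this]
      linarith

/-- The group of differences. -/
def diffGroup {q : ℕ} (A : Fin q → Set ℤ) : AddSubgroup ℤ where
  carrier := {z | ∃ K τ, (RepSet A K τ).Nonempty ∧ (RepSet A K (τ + z)).Nonempty}
  zero_mem' := ⟨0, 0, nonempty_zero A, by simpa using nonempty_zero A⟩
  add_mem' := by
    rintro x y ⟨K, τ, h1, h2⟩ ⟨K', τ', h1', h2'⟩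
    refine ⟨K + K', τ + τ', nonempty_add h1 h1', ?_⟩
    rw [add_add_add_comm]
    exact nonempty_add h2 h2'
  neg_mem' := by
    rintro x ⟨K, τ, h1, h2⟩
    exact ⟨K, τ + x, h2, by simpa using h1⟩

theorem middle {q : ℕ} {A : Fin q → Set ℤ} (hfin : ∀ i, (A i).Finite)
    {a b : Fin q → ℤ} (haA : ∀ i, a i ∈ A i) (hbA : ∀ i, b i ∈ A i)
    (ha : ∀ i, ∀ x ∈ A i, a i ≤ x) (hb : ∀ i, ∀ x ∈ A i, x ≤ b i)
    (i₀ : Fin q) (hi₀ : a i₀ < b i₀) (t : ℕ) (K : Fin q → ℕ) (σ : ℤ)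
    (hK : t ≤ (RepSet A K σ).ncard) (hKne : (RepSet A K σ).Nonempty) :
    ∃ g : ℤ, 0 < g ∧ (∀ h n n', (RepSet A h n).Nonempty → (RepSet A h n').Nonempty → g ∣ n - n') ∧
      ∃ (K' : Fin q → ℕ) (c d : ℕ), g ∣ (c : ℤ) ∧ g ∣ (d : ℤ) ∧
        ∀ h : Fin q → ℕ, (∀ i, K' i ≤ h i) → ∀ n : ℤ, g ∣ n - ∑ i, h i * a i →
          ∑ i, h i * a i + c ≤ n → n ≤ ∑ i, h i * b i - d → t ≤ (RepSet A h n).ncard := by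
  obtain ⟨g₀, hg₀⟩ := Int.subgroup_cyclic (diffGroup A)
  have hmem : ∀ z, z ∈ diffGroup A ↔ g₀ ∣ z := by
    intro z
    rw [hg₀, ← AddSubgroup.zmultiples_eq_closure, Int.mem_zmultiples_iff]
  have hdiv : ∀ h n n', (RepSet A h n).Nonempty → (RepSet A h n').Nonempty → |g₀| ∣ n - n' := by
    intro h n n' h1 h2
    rw [abs_dvd, ← hmem]
    exact ⟨h, n', h2, by simpa using h1⟩
  have hg : 0 < |g₀| := by
    rw [abs_pos]
    rintro rfl
    have h1 := hdiv _ _ _ (nonempty_const hbA (Pi.single i₀ 1)) (nonempty_const haA (Pi.single i₀ 1))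
    simp [Pi.single_apply] at h1
    omega
  generalize hgg : |g₀| = g at hdiv hg
  obtain ⟨K₁, τ, hτ, hτg⟩ : g ∈ diffGroup A := by rw [hmem, ← hgg]; simp
  set m : ℤ := ∑ i, (b i - a i) with hm
  have he : ∀ i, 0 ≤ b i - a i := fun i => sub_nonneg.2 (ha i _ (hbA i))
  have hem : ∀ i, b i - a i ≤ m := fun i =>
    Finset.single_le_sum (f := fun i => b i - a i) (fun j _ => he j) (Finset.mem_univ i)
  have hm0 : 0 ≤ m := Finset.sum_nonneg fun i _ => he i
  obtain ⟨L, hL⟩ := Int.eq_ofNat_of_zero_le hm0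
  have hprog := progression hτ hτg L
  have hbase : (RepSet A (L • K₁ + K) (L * τ + σ)).Nonempty :=
    nonempty_add (by simpa using hprog 0 (Nat.zero_le _)) hKne
  set K' := L • K₁ + K with hK'
  obtain ⟨c, hc⟩ := Int.eq_ofNat_of_zero_le (sub_nonneg.2 (low_bound ha hbase))
  obtain ⟨d, hd⟩ := Int.eq_ofNat_of_zero_le (sub_nonneg.2 (high_bound hb hbase))
  refine ⟨g, hg, hdiv, K', c, d, ?_, ?_, ?_⟩
  · rw [← hc]; exact hdiv _ _ _ hbase (nonempty_const haA _)
  · rw [← hd]; exact hdiv _ _ _ (nonempty_const hbA _) hbase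
  intro h hh n hn1 hn2 hn3
  obtain ⟨k, rfl⟩ : ∃ k, h = k + K' := ⟨h - K', by funext i; simp [hh i]⟩
  have hsa : ∑ i, ((k + K') i : ℤ) * a i = ∑ i, k i * a i + ∑ i, K' i * a i := by
    simp [add_mul, Finset.sum_add_distrib]
  have hsb : ∑ i, ((k + K') i : ℤ) * b i = ∑ i, k i * b i + ∑ i, K' i * b i := by
    simp [add_mul, Finset.sum_add_distrib]
  have hse : ∑ i, (k i : ℤ) * (b i - a i) = ∑ i, k i * b i - ∑ i, k i * a i := by
    simp [mul_sub, Finset.sum_sub_distrib]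
  obtain ⟨z, hz⟩ := Int.eq_ofNat_of_zero_le
    (show 0 ≤ n - (L * τ + σ) - ∑ i, k i * a i by linarith)
  obtain ⟨j, hj, hj1, hj2⟩ := chain_step (fun i => b i - a i) he m hem hm0 k z
    (by rw [hse, ← hz]; linarith)
  have hchain : (RepSet A k (∑ i, k i * a i + ∑ i, j i * (b i - a i))).Nonempty := by
    have := nonempty_add (nonempty_const hbA j) (nonempty_const haA (k - j))
    rw [add_tsub_cancel_of_le (show j ≤ k from hj)] at this
    convert this using 2
    rw [← Finset.sum_add_distrib, ← Finset.sum_add_distrib]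
    refine Finset.sum_congr rfl fun i _ => ?_
    rw [Pi.sub_apply, Nat.cast_sub (hj i)]
    ring
  set w := ∑ i, (j i : ℤ) * (b i - a i) with hw
  have hdv : g ∣ z - w := by
    have h1 := hdiv _ _ _ (nonempty_add hchain hbase) (nonempty_const haA _)
    have h2 := dvd_sub hn1 h1
    have h3 : (z : ℤ) - w = (n - ∑ i, ((k + K') i : ℤ) * a i) -
      (∑ i, k i * a i + w + (L * τ + σ) - ∑ i, ((k + K') i : ℤ) * a i) := by
      linarith
    rw [h3]; exact h2
  obtain ⟨p, hp⟩ := hdv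
  have hp0 : 0 ≤ p := by
    by_contra hcon
    nlinarith
  obtain ⟨p, rfl⟩ := Int.eq_ofNat_of_zero_le hp0
  have hpL : p ≤ L := by
    have : (p : ℤ) ≤ L := by nlinarith
    exact_mod_cast this
  have hfinal := nonempty_add hchain (hprog p hpL)
  have := ncard_add hfin (k := K) (m := σ) hfinal
  rw [add_assoc, ← hK'] at this
  have hn : ∑ i, (k i : ℤ) * a i + w + (L * τ + p * g) + σ = n := by
    linarith
  rw [hn] at this
  exact hK.trans this

set_option maxHeartbeats 1000000 in
/-- Threshold chromatic layers of arbitrary tuples of finite nonempty sets of integers: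
for fixed `t, r ∈ ℕ`, there is a threshold vector `h_{r,t}` such that for every
`h ⪰ h_{r,t}` there is `X_h ⊆ ℤ` with `|X_h| ≤ r + 2` and
`((rh)·𝒜')^{(t)} ⊆ X_h + (h·𝒜')^{(t)}`. -/
theorem stmt18 {q : ℕ} (A : Fin q → Set ℤ)
    (hfin : ∀ i, (A i).Finite) (hne : ∀ i, (A i).Nonempty)
    (t r : ℕ) (ht : 0 < t) (hr : 0 < r) :
    ∃ h₀ : Fin q → ℕ, ∀ h : Fin q → ℕ, (∀ i, h₀ i ≤ h i) →
      ∃ X : Finset ℤ, X.card ≤ r + 2 ∧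
        chromLayer A (fun i => r * h i) t ⊆ ↑X + chromLayer A h t := by
  classical
  have hlayer : ∀ h n, n ∈ chromLayer A h t ↔ t ≤ (RepSet A h n).ncard := by
    intro h n
    rw [← chromRep_eq]; rfl
  have hnon : ∀ h n, t ≤ (RepSet A h n).ncard → (RepSet A h n).Nonempty := by
    intro h n hn
    exact Set.nonempty_of_ncard_ne_zero (by omega)
  by_cases hex : ∃ K σ, t ≤ (RepSet A K σ).ncard
  swap
  · refine ⟨0, fun h _ => ⟨∅, by simp, fun n hn => ?_⟩⟩
    exact absurd ⟨_, _, (hlayer _ _).1 hn⟩ hex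
  obtain ⟨K, σ, hK⟩ := hex
  have hKne := hnon _ _ hK
  choose a haA ha using fun i => Set.exists_min_image (A i) id (hfin i) (hne i)
  choose b hbA hb using fun i => Set.exists_max_image (A i) id (hfin i) (hne i)
  simp only [id] at ha hb
  by_cases hab : ∃ i, a i < b i
  swap
  · push Not at hab
    have hab' : ∀ i, a i = b i := fun i => le_antisymm (ha i _ (hbA i)) (hab i)
    obtain rfl : a = b := funext hab'
    refine ⟨K, fun h hh => ?_⟩
    obtain ⟨k, rfl⟩ : ∃ k, h = k + K := ⟨h - K, by funext i; simp [hh i]⟩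
    have h1 := ncard_add hfin (k := K) (m := σ) (nonempty_const haA k)
    generalize (∑ i, (k i : ℤ) * a i) + σ = y at h1
    refine ⟨{(∑ i, ((r * (k + K) i : ℕ) : ℤ) * a i) - y}, by simp, fun n hn => ?_⟩
    rw [hlayer] at hn
    have h2 := low_bound ha (hnon _ _ hn)
    have h3 := high_bound hb (hnon _ _ hn)
    refine Set.mem_add.2 ⟨_, Finset.mem_coe.2 (Finset.mem_singleton_self _), y, (hlayer _ _).2 (hK.trans h1), ?_⟩
    push_cast at h2 h3 ⊢
    linarith
  obtain ⟨i₀, hi₀⟩ := hab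
  obtain ⟨g, hg, hdiv, K', c, d, hgc, hgd, hmid⟩ :=
    middle hfin haA hbA ha hb i₀ hi₀ t K σ hK hKne
  refine ⟨fun i => K' i + (r + 1) * (c + d) + 1, fun h hh => ?_⟩
  have hhK : ∀ i, K' i ≤ h i := fun i => by have := hh i; dsimp only at this; omega
  have hhc : ∀ i, (r + 1) * (c + d) + 1 ≤ h i := fun i => by have := hh i; dsimp only at this; omega
  have hcd : ∀ i, c + d ≤ h i := fun i =>
    (Nat.le_mul_of_pos_left (c + d) (Nat.succ_pos r)).trans ((Nat.le_succ _).trans (hhc i))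
  set S := ∑ i, (h i : ℤ) * a i with hS
  set T := ∑ i, (h i : ℤ) * b i with hT
  have hM : ((r + 1) * (c + d) + 1 : ℤ) ≤ T - S := by
    rw [hS, hT, ← Finset.sum_sub_distrib]
    have h1 : (h i₀ : ℤ) * b i₀ - h i₀ * a i₀ ≤ ∑ i, ((h i : ℤ) * b i - h i * a i) :=
      Finset.single_le_sum (f := fun i => (h i : ℤ) * b i - h i * a i)
        (fun j _ => by
          have := ha j _ (hbA j)
          rw [← mul_sub]; exact mul_nonneg (by positivity) (by linarith)) (Finset.mem_univ i₀)
    have h2 : ((r + 1) * (c + d) + 1 : ℤ) ≤ h i₀ := by exact_mod_cast hhc i₀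
    have h3 : (1 : ℤ) ≤ b i₀ - a i₀ := by linarith
    nlinarith
  have hrS : ∑ i, ((r * h i : ℕ) : ℤ) * a i = r * S := by
    rw [hS, Finset.mul_sum]; refine Finset.sum_congr rfl fun i _ => ?_; push_cast; ring
  have hrT : ∑ i, ((r * h i : ℕ) : ℤ) * b i = r * T := by
    rw [hT, Finset.mul_sum]; refine Finset.sum_congr rfl fun i _ => ?_; push_cast; ring
  have hTS : g ∣ T - S := hdiv h _ _ (nonempty_const hbA h) (nonempty_const haA h)
  set W : ℤ := T - S - c - d with hW
  have hgW : g ∣ W := dvd_sub (dvd_sub hTS hgc) hgd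
  have hr1 : (1 : ℤ) ≤ r := by exact_mod_cast hr
  have hc0 : (0 : ℤ) ≤ c := by positivity
  have hd0 : (0 : ℤ) ≤ d := by positivity
  have hrcd : 0 ≤ (r : ℤ) * (c + d) := by positivity
  have hWpos : 0 < W := by rw [hW]; linarith
  obtain ⟨r', rfl⟩ : ∃ r', r = r' + 1 := ⟨r - 1, by omega⟩
  have hsplit : (fun i => (r' + 1) * h i) = h + fun i => r' * h i := by
    funext i; simp; ring
  have hkS : ∑ i, ((r' * h i : ℕ) : ℤ) * a i = r' * S := by
    rw [hS, Finset.mul_sum]; refine Finset.sum_congr rfl fun i _ => ?_; push_cast; ring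
  have hkT : ∑ i, ((r' * h i : ℕ) : ℤ) * b i = r' * T := by
    rw [hT, Finset.mul_sum]; refine Finset.sum_congr rfl fun i _ => ?_; push_cast; ring
  refine ⟨insert (r' * T) ((Finset.range (r' + 1 + 1)).image fun j : ℕ => r' * S + j * W), ?_, ?_⟩
  · refine (Finset.card_insert_le _ _).trans ?_
    have := Finset.card_image_le (s := Finset.range (r' + 1 + 1))
      (f := fun j : ℕ => (r' * S + j * W : ℤ))
    rw [Finset.card_range] at this
    omega
  intro n hn
  rw [hlayer] at hn
  have hnn := hnon _ _ hn
  have hdn := hdiv _ _ _ hnn (nonempty_const haA _)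
  rw [hrS] at hdn
  by_cases hlow : n - ((r' + 1 : ℕ) : ℤ) * S < c
  · -- near the bottom
    refine Set.mem_add.2 ⟨r' * S, ?_, n - r' * S, ?_, by ring⟩
    · rw [Finset.mem_coe]
      exact Finset.mem_insert_of_mem
        (Finset.mem_image.2 ⟨0, Finset.mem_range.2 (Nat.succ_pos _), by simp⟩)
    · rw [hlayer]
      refine hn.trans ?_
      rw [hsplit]
      refine ncard_remove hfin a (fun s hs i => ?_) (by rw [hkS])
      rw [← hsplit] at hs
      have h1 := low_count ha hs i
      rw [hrS] at h1
      have h2 : (c : ℤ) ≤ h i := by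
        have : c ≤ h i := by have := hcd i; omega
        exact_mod_cast this
      have h3 : ((r' * h i : ℕ) : ℤ) ≤ (s i).count (a i) := by
        push_cast at h1 hlow ⊢; linarith
      exact_mod_cast h3
  by_cases hhigh : ((r' + 1 : ℕ) : ℤ) * T - n < d
  · -- near the top
    refine Set.mem_add.2 ⟨r' * T, by simp, n - r' * T, ?_, by ring⟩
    rw [hlayer]
    refine hn.trans ?_
    rw [hsplit]
    refine ncard_remove hfin b (fun s hs i => ?_) (by rw [hkT])
    rw [← hsplit] at hs
    have h1 := high_count hb hs i
    rw [hrT] at h1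
    have h2 : (d : ℤ) ≤ h i := by
      have : d ≤ h i := by have := hcd i; omega
      exact_mod_cast this
    have h3 : ((r' * h i : ℕ) : ℤ) ≤ (s i).count (b i) := by
      push_cast at h1 hhigh ⊢; linarith
    exact_mod_cast h3
  -- middle
  set y : ℤ := n - ((r' + 1 : ℕ) : ℤ) * S with hy
  have hj0 : 0 ≤ (y - c) / W := Int.ediv_nonneg (by linarith) hWpos.le
  obtain ⟨j, hj⟩ := Int.eq_ofNat_of_zero_le hj0
  have hmod := Int.emod_add_mul_ediv (y - c) W
  have hm1 := Int.emod_nonneg (y - c) hWpos.ne'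
  have hm2 := Int.emod_lt_of_pos (y - c) hWpos
  rw [hj] at hmod
  have hjr : j < r' + 1 + 1 := by
    by_contra hcon
    have h1 : ((r' : ℤ) + 1 + 1) ≤ j := by exact_mod_cast not_lt.1 hcon
    have h2 : W * ((r' : ℤ) + 1 + 1) ≤ W * j := mul_le_mul_of_nonneg_left h1 hWpos.le
    push_cast at hhigh hy hM
    nlinarith
  refine Set.mem_add.2 ⟨r' * S + j * W, ?_, n - (r' * S + j * W), ?_, by ring⟩
  · rw [Finset.mem_coe]
    exact Finset.mem_insert_of_mem
      (Finset.mem_image_of_mem (fun j : ℕ => (r' * S + j * W : ℤ)) (Finset.mem_range.2 hjr))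
  · rw [hlayer]
    have e : n - (r' * S + j * W) = S + y - W * j := by rw [hy]; push_cast; ring
    refine hmid h hhK _ ?_ ?_ ?_
    · rw [e]
      have : S + y - W * j - S = y - W * j := by ring
      rw [this]
      exact dvd_sub hdn (hgW.mul_right _)
    · rw [e]; linarith
    · rw [e]; linarith
end
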